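/- Let m > 1 be an integer. There exist a constant c > 0 and a real number X₀ such that for all real X ≥ X₀, the number of negative squarefree integers d such that the absolute value of the discriminant of the imaginary quadratic field ℚ(√d) is at most X and the ideal class group Cl(ℚ(√d)) contains a subgroup isomorphic to (ℤ/mℤ)² is at least c · X^(1/m) / (log X)². -/

import Mathlib

open NumberField

/-- `d` is a negative squarefree integer such that the imaginary quadratic field
`ℚ(√d)` (characterized as a degree-2 number field containing a square root of `d`)
has `|discriminant| ≤ X` and its ideal class group contains a subgroup isomorphic
to `(ℤ/mℤ)²`. -/
def GoodRankMsq (m : ℕ) (X : ℝ) (d : ℤ) : Prop :=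
  d < 0 ∧ Squarefree d ∧
  ∀ (K : Type) [Field K] [NumberField K],
    (∃ x : K, x * x = (d : K)) → Module.finrank ℚ K = 2 →
      (|NumberField.discr K| : ℝ) ≤ X ∧
      ∃ f : Multiplicative (ZMod m × ZMod m) →* ClassGroup (𝓞 K), Function.Injective f

section field
variable {K : Type} [Field K] [NumberField K] {d : ℤ} {x : K}

theorem qf_indep (hx : x * x = (d : K)) (hd : d < 0) (u v : ℚ)
    (h : (u : K) + (v : K) * x = 0) : u = 0 ∧ v = 0 := by
  have h1 : ((u * u : ℚ) : K) = ((v * v * d : ℚ) : K) := by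
    push_cast
    rw [← hx]
    have : (u : K) = - (v * x) := by linear_combination h
    rw [this]; ring
  have h2 : u * u = v * v * d := by exact_mod_cast h1
  have hd' : (d : ℚ) < 0 := by exact_mod_cast hd
  have hv : v = 0 := by
    by_contra hv
    have : 0 < v * v := mul_self_pos.2 hv
    nlinarith [mul_self_nonneg u]
  subst hv
  simp at h2
  exact ⟨h2, rfl⟩

theorem qf_unique (hx : x * x = (d : K)) (hd : d < 0) (u v u' v' : ℚ)
    (h : (u : K) + (v : K) * x = (u' : K) + (v' : K) * x) : u = u' ∧ v = v' := by
  have := qf_indep hx hd (u - u') (v - v') (by push_cast; linear_combination h)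
  exact ⟨sub_eq_zero.1 this.1, sub_eq_zero.1 this.2⟩

theorem qf_li (hx : x * x = (d : K)) (hd : d < 0) : LinearIndependent ℚ ![1, x] := by
  rw [LinearIndependent.pair_iff]
  intro s t h
  apply qf_indep hx hd
  simpa [Algebra.smul_def] using h

noncomputable def qfBasis (hx : x * x = (d : K)) (hd : d < 0) (hK : Module.finrank ℚ K = 2) :
    Module.Basis (Fin 2) ℚ K :=
  basisOfLinearIndependentOfCardEqFinrank (qf_li hx hd) (by simp [hK])

theorem qfBasis_coe (hx : x * x = (d : K)) (hd : d < 0) (hK : Module.finrank ℚ K = 2) :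
    ⇑(qfBasis hx hd hK) = ![1, x] := by
  simp [qfBasis]

theorem qf_coords (hx : x * x = (d : K)) (hd : d < 0) (hK : Module.finrank ℚ K = 2) (z : K) :
    ∃ u v : ℚ, z = (u : K) + (v : K) * x := by
  refine ⟨(qfBasis hx hd hK).repr z 0, (qfBasis hx hd hK).repr z 1, ?_⟩
  conv_lhs => rw [← (qfBasis hx hd hK).sum_repr z]
  simp [Fin.sum_univ_two, qfBasis_coe, Algebra.smul_def]

theorem qf_trace (hx : x * x = (d : K)) (hd : d < 0) (hK : Module.finrank ℚ K = 2) (u v : ℚ) :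
    Algebra.trace ℚ K ((u : K) + (v : K) * x) = 2 * u := by
  have h1 : Algebra.trace ℚ K (u : K) = 2 * u := by
    have := Algebra.trace_algebraMap (S := K) u
    rw [hK] at this
    simpa [two_mul] using this
  have h2 : Algebra.trace ℚ K x = 0 := by
    rw [Algebra.trace_eq_matrix_trace (qfBasis hx hd hK), Matrix.trace_fin_two,
      Algebra.leftMulMatrix_eq_repr_mul, Algebra.leftMulMatrix_eq_repr_mul, qfBasis_coe]
    have e0 : x * (![1, x] : Fin 2 → K) 0 = (qfBasis hx hd hK) 1 := by simp [qfBasis_coe]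
    have e1 : x * (![1, x] : Fin 2 → K) 1 = (d : ℚ) • (qfBasis hx hd hK) 0 := by
      simp [qfBasis_coe, hx, Algebra.smul_def]
    rw [e0, e1]
    simp
  have h3 : (v : K) * x = v • x := by simp [Algebra.smul_def]
  rw [map_add, h1, h3, map_smul, h2]; simp

theorem rat_int_of_integral {q : ℚ} (h : IsIntegral ℤ (q : K)) : ∃ t : ℤ, q = t := by
  have h' : IsIntegral ℤ (algebraMap ℚ K q) := by simpa using h
  rw [isIntegral_algebraMap_iff (algebraMap ℚ K).injective] at h'
  obtain ⟨t, ht⟩ := IsIntegrallyClosed.isIntegral_iff.1 h'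
  exact ⟨t, by simpa using ht.symm⟩

theorem qf_int_trace (hx : x * x = (d : K)) (hd : d < 0) (hK : Module.finrank ℚ K = 2) (u v : ℚ)
    (h : IsIntegral ℤ ((u : K) + (v : K) * x)) : ∃ t : ℤ, 2 * u = t := by
  have := Algebra.isIntegral_trace (L := ℚ) h
  rw [qf_trace hx hd hK] at this
  obtain ⟨t, ht⟩ := IsIntegrallyClosed.isIntegral_iff.1 this
  exact ⟨t, by simpa using ht.symm⟩

theorem qf_x_int (hx : x * x = (d : K)) : IsIntegral ℤ x := by
  have : IsIntegral ℤ (x ^ 2) := by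
    rw [pow_two, hx]; exact_mod_cast isIntegral_algebraMap (R := ℤ) (A := K) (x := d)
  exact IsIntegral.of_pow (by norm_num) this

theorem qf_int (hx : x * x = (d : K)) (hd : d < 0) (hK : Module.finrank ℚ K = 2) (u v : ℚ)
    (h : IsIntegral ℤ ((u : K) + (v : K) * x)) :
    ∃ t N s : ℤ, 2 * u = t ∧ u * u - d * (v * v) = N ∧ 2 * v * d = s := by
  obtain ⟨t, ht⟩ := qf_int_trace hx hd hK u v h
  have hxi := qf_x_int hx
  obtain ⟨s, hs⟩ := qf_int_trace hx hd hK (v * d) u (by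
    have := h.mul hxi
    have e : ((v * d : ℚ) : K) + (u : K) * x = ((u : K) + (v : K) * x) * x := by
      push_cast
      rw [← hx]; ring
    rw [e]; exact this)
  have hN : IsIntegral ℤ ((u * u - d * (v * v) : ℚ) : K) := by
    have h2 : IsIntegral ℤ ((t : K) - ((u : K) + (v : K) * x)) := by
      refine IsIntegral.sub ?_ h
      exact_mod_cast isIntegral_algebraMap (R := ℤ) (A := K) (x := t)
    have := h.mul h2
    have ht' : (t : K) = 2 * u := by exact_mod_cast congrArg (fun q : ℚ => (q : K)) ht.symm
    have e : ((u * u - d * (v * v) : ℚ) : K)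
        = ((u : K) + (v : K) * x) * ((t : K) - ((u : K) + (v : K) * x)) := by
      push_cast
      rw [ht', ← hx]; ring
    rw [e]; exact this
  obtain ⟨N, hN⟩ := rat_int_of_integral hN
  exact ⟨t, N, s, ht, hN, by linarith⟩

theorem qf_unit (hx : x * x = (d : K)) (hd : d < 0) (hK : Module.finrank ℚ K = 2)
    (ε : (𝓞 K)ˣ) : ε ^ 12 = 1 := by
  obtain ⟨u, v, huv⟩ := qf_coords hx hd hK ((ε : 𝓞 K) : K)
  obtain ⟨u', v', huv'⟩ := qf_coords hx hd hK (((ε⁻¹ : (𝓞 K)ˣ) : 𝓞 K) : K)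
  have hi : IsIntegral ℤ (((ε : 𝓞 K) : K)) := RingOfIntegers.isIntegral_coe _
  have hi' : IsIntegral ℤ ((((ε⁻¹ : (𝓞 K)ˣ) : 𝓞 K) : K)) := RingOfIntegers.isIntegral_coe _
  have hmul : ((ε : 𝓞 K) : K) * (((ε⁻¹ : (𝓞 K)ˣ) : 𝓞 K) : K) = 1 := by
    rw [← map_mul]; simp
  rw [huv, huv'] at hmul
  have hmul2 : ((u * u' + d * (v * v') : ℚ) : K) + ((u * v' + u' * v : ℚ) : K) * x
      = ((1 : ℚ) : K) + ((0 : ℚ) : K) * x := by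
    push_cast
    rw [← hx]
    linear_combination hmul
  obtain ⟨e1, e2⟩ := qf_unique hx hd _ _ _ _ hmul2
  rw [huv] at hi
  rw [huv'] at hi'
  obtain ⟨t, N, s, h1, h2, h3⟩ := qf_int hx hd hK u v hi
  obtain ⟨t', N', s', h1', h2', h3'⟩ := qf_int hx hd hK u' v' hi'
  have hNN : (N : ℚ) * N' = 1 := by
    rw [← h2, ← h2']
    linear_combination (u * u' + d * (v * v') + 1) * e1 - d * (u * v' + u' * v) * e2
  have hd' : (d : ℚ) < 0 := by exact_mod_cast hd
  have hNN' : N * N' = 1 := by exact_mod_cast hNN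
  have hNnn : (0 : ℚ) ≤ N := by rw [← h2]; nlinarith [mul_self_nonneg u, mul_self_nonneg v]
  have hN0 : 0 ≤ N := by exact_mod_cast hNnn
  have hN1 : N = 1 := by
    rcases Int.eq_one_or_neg_one_of_mul_eq_one hNN' with h | h <;> omega
  have ht4 : (t : ℚ) * t ≤ 4 := by
    rw [← h1]
    rw [hN1] at h2
    push_cast at h2
    nlinarith [mul_self_nonneg v]
  have ht4' : t * t ≤ 4 := by exact_mod_cast ht4
  have hq : ((ε : 𝓞 K) : K) * ((ε : 𝓞 K) : K) = t * ((ε : 𝓞 K) : K) - 1 := by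
    have ht' : (t : K) = 2 * u := by exact_mod_cast congrArg (fun q : ℚ => (q : K)) h1.symm
    have hn' : (u : K) * u - d * (v * v) = 1 := by
      rw [hN1] at h2
      exact_mod_cast congrArg (fun q : ℚ => (q : K)) h2
    rw [huv, ht']
    rw [← hx] at hn'
    linear_combination -hn'
  set e : K := ((ε : 𝓞 K) : K) with he
  have hb1 : -2 ≤ t := by nlinarith
  have hb2 : t ≤ 2 := by nlinarith
  have key : e ^ 12 = 1 := by
    interval_cases t
    · have : (e + 1) * (e + 1) = 0 := by push_cast at hq; linear_combination hq
      have : e = -1 := by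
        have := mul_self_eq_zero.1 this
        linear_combination this
      rw [this]; norm_num
    · have : e ^ 3 = 1 := by push_cast at hq; linear_combination (e - 1) * hq
      calc e ^ 12 = (e ^ 3) ^ 4 := by ring
        _ = 1 := by rw [this]; norm_num
    · have : e ^ 2 = -1 := by push_cast at hq; linear_combination hq
      calc e ^ 12 = (e ^ 2) ^ 6 := by ring
        _ = 1 := by rw [this]; norm_num
    · have : e ^ 3 = -1 := by push_cast at hq; linear_combination (e + 1) * hq
      calc e ^ 12 = (e ^ 3) ^ 4 := by ring
        _ = 1 := by rw [this]; norm_num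
    · have : (e - 1) * (e - 1) = 0 := by push_cast at hq; linear_combination hq
      have : e = 1 := by
        have := mul_self_eq_zero.1 this
        linear_combination this
      rw [this]; norm_num
  apply Units.ext
  apply RingOfIntegers.ext
  push_cast
  simpa [he] using key

end field

section field
variable {K : Type} [Field K] [NumberField K] {d : ℤ} {x : K}

theorem qf_discr (hx : x * x = (d : K)) (hd : d < 0) (hK : Module.finrank ℚ K = 2) :
    ∃ (b : Module.Basis (Fin 2) ℤ (𝓞 K)) (u v : Fin 2 → ℚ),
      (∀ i, algebraMap (𝓞 K) K (b i) = (u i : K) + (v i : K) * x) ∧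
      (discr K : ℚ) = 4 * d * (u 0 * v 1 - u 1 * v 0) ^ 2 := by
  have hc : Module.finrank ℤ (𝓞 K) = 2 := by rw [RingOfIntegers.rank, hK]
  let b : Module.Basis (Fin 2) ℤ (𝓞 K) := Module.finBasisOfFinrankEq ℤ (𝓞 K) hc
  choose u v huv using fun i : Fin 2 => qf_coords hx hd hK (algebraMap (𝓞 K) K (b i))
  refine ⟨b, u, v, huv, ?_⟩
  rw [← NumberField.discr_eq_discr K b]
  have ht : ∀ i j, ((Algebra.traceMatrix ℤ b i j : ℤ) : ℚ) = 2 * (u i * u j + d * (v i * v j)) := by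
    intro i j
    rw [Algebra.traceMatrix_apply, Algebra.traceForm_apply]
    have := Algebra.trace_localization ℤ (nonZeroDivisors ℤ) (Rₘ := ℚ) (Sₘ := K) (b i * b j)
    have h2 : ((Algebra.trace ℤ (𝓞 K) (b i * b j) : ℤ) : ℚ)
      = Algebra.trace ℚ K ((algebraMap (𝓞 K) K) (b i * b j)) := by
      rw [this]; simp
    rw [h2, map_mul]
    have e : (algebraMap (𝓞 K) K) (b i) * (algebraMap (𝓞 K) K) (b j)
      = ((u i * u j + d * (v i * v j) : ℚ) : K) + ((u i * v j + u j * v i : ℚ) : K) * x := by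
      have h1 := huv i
      have h2 := huv j
      rw [h1, h2]
      push_cast
      rw [← hx]; ring
    rw [e, qf_trace hx hd hK]
  rw [Algebra.discr_def, Matrix.det_fin_two]
  push_cast
  rw [ht, ht, ht, ht]
  ring

theorem qf_discr_le (hx : x * x = (d : K)) (hd : d < 0) (hK : Module.finrank ℚ K = 2) :
    (|discr K| : ℤ) ≤ 4 * |d| := by
  obtain ⟨b, u, v, huv, hdisc⟩ := qf_discr hx hd hK
  have hrep : ∀ z : 𝓞 K, ∀ p q : ℚ, algebraMap (𝓞 K) K z = p + q * x →
      ∃ n0 n1 : ℤ, n0 * u 0 + n1 * u 1 = p ∧ n0 * v 0 + n1 * v 1 = q := by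
    intro z p q hz
    refine ⟨b.repr z 0, b.repr z 1, ?_⟩
    apply qf_unique hx hd
    rw [← hz]
    conv_rhs => rw [← b.sum_repr z]
    simp only [Fin.sum_univ_two, map_add, zsmul_eq_mul, map_mul, map_intCast]
    have h0 := huv 0
    have h1 := huv 1
    rw [h0, h1]
    push_cast
    ring
  obtain ⟨n0, n1, hn1, hn2⟩ := hrep 1 1 0 (by simp)
  obtain ⟨m0, m1, hm1, hm2⟩ := hrep ⟨x, qf_x_int hx⟩ 0 1 (by
    show x = _; simp)
  have hdet : ((n0 * m1 - n1 * m0 : ℤ) : ℚ) * (u 0 * v 1 - u 1 * v 0) = 1 := by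
    push_cast
    linear_combination (m0 * v 0 + m1 * v 1) * hn1 + hm2 - (m0 * u 0 + m1 * u 1) * hn2
  set k := n0 * m1 - n1 * m0
  have hk : (1 : ℚ) ≤ (k : ℚ) ^ 2 := by
    have : k ≠ 0 := by rintro h; rw [h] at hdet; simp at hdet
    have : 1 ≤ k ^ 2 := by have := sq_pos_of_ne_zero this; omega
    exact_mod_cast this
  have : (discr K : ℚ) * k ^ 2 = 4 * d := by
    rw [hdisc]
    linear_combination 4 * (d : ℚ) * (k * (u 0 * v 1 - u 1 * v 0) + 1) * hdet
  have h2 : |(discr K : ℚ)| * k ^ 2 = 4 * |(d : ℚ)| := by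
    rw [← abs_of_nonneg (sq_nonneg (k : ℚ)), ← abs_mul, this, abs_mul]; norm_num
  have : |(discr K : ℚ)| ≤ 4 * |(d : ℚ)| := by
    nlinarith [abs_nonneg (discr K : ℚ)]
  exact_mod_cast this

theorem qf_discr_ge (hx : x * x = (d : K)) (hd : d < 0) (hs : Squarefree d)
    (hK : Module.finrank ℚ K = 2) : |d| ≤ 4 * |discr K| := by
  obtain ⟨b, u, v, huv, hdisc⟩ := qf_discr hx hd hK
  have hintegral : ∀ i, ∃ t r : ℤ, 2 * u i = t ∧ 2 * v i = r := by
    intro i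
    have hi : IsIntegral ℤ ((u i : K) + (v i : K) * x) := by
      rw [← huv i]; exact RingOfIntegers.isIntegral_coe _
    obtain ⟨t, N, s, h1, h2, h3⟩ := qf_int hx hd hK _ _ hi
    have hd0 : (d : ℚ) ≠ 0 := by exact_mod_cast hd.ne
    have : (s : ℚ) * s = d * (t * t - 4 * N) := by
      rw [← h1, ← h2, ← h3]; ring
    have hds : d ∣ s * s := ⟨t * t - 4 * N, by exact_mod_cast this⟩
    have hds' : d ∣ s := (hs.dvd_pow_iff_dvd (two_ne_zero)).1 (by rwa [pow_two])
    obtain ⟨r, hr⟩ := hds'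
    refine ⟨t, r, h1, ?_⟩
    have : (d : ℚ) * (2 * v i) = d * r := by
      have : (s : ℚ) = d * r := by exact_mod_cast hr
      rw [← this, ← h3]; ring
    exact mul_left_cancel₀ hd0 this
  obtain ⟨t0, r0, h1, h2⟩ := hintegral 0
  obtain ⟨t1, r1, h3, h4⟩ := hintegral 1
  have hq : (4 * discr K : ℚ) = d * ((t0 * r1 - t1 * r0 : ℤ) : ℚ) ^ 2 := by
    rw [hdisc]; push_cast
    rw [← h1, ← h2, ← h3, ← h4]; ring
  have hz : 4 * discr K = d * (t0 * r1 - t1 * r0) ^ 2 := by exact_mod_cast hq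
  have hne : discr K ≠ 0 := discr_ne_zero K
  have hne' : (t0 * r1 - t1 * r0) ≠ 0 := by
    intro h; rw [h] at hz; simp at hz; exact hne hz
  have h5 : 0 < (t0 * r1 - t1 * r0) ^ 2 := by positivity
  have : 4 * |discr K| = |d| * (t0 * r1 - t1 * r0) ^ 2 := by
    rw [← abs_of_pos h5, ← abs_mul, ← hz, abs_mul]; norm_num
  rw [this]
  nlinarith [abs_nonneg d]

theorem qf_hom {D : ℤ} {θ : 𝓞 K} (hθ : θ * θ = (D : 𝓞 K)) (hD : D < 0)
    (hK : Module.finrank ℚ K = 2) (q : ℕ) [Fact q.Prime] (δ : ZMod q)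
    (hδ : δ * δ = (D : ZMod q)) (h2 : 2 * δ ≠ 0) : ∃ φ : 𝓞 K →+* ZMod q, φ θ = δ := by
  have hx : algebraMap (𝓞 K) K θ * algebraMap (𝓞 K) K θ = (D : K) := by
    rw [← map_mul, hθ]; simp
  obtain ⟨δ', rfl⟩ := ZMod.intCast_surjective δ
  have hqD : (q : ℤ) ∣ D - δ' * δ' := by
    rw [← ZMod.intCast_zmod_eq_zero_iff_dvd] 
    push_cast; rw [hδ]; simp
  have h2' : ¬ (q : ℤ) ∣ 2 * δ' := by
    rw [← ZMod.intCast_zmod_eq_zero_iff_dvd]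
    push_cast; exact h2
  let I : Ideal (𝓞 K) := Ideal.span {(q : 𝓞 K), θ - (δ' : 𝓞 K)}
  have hI : I ≠ ⊤ := by
    intro h
    have h1 : (1 : 𝓞 K) ∈ I := by rw [h]; trivial
    obtain ⟨A, B, hAB⟩ := Ideal.mem_span_pair.1 h1
    obtain ⟨k, hk⟩ := hqD
    have hk' : (D : 𝓞 K) - δ' * δ' = q * k := by exact_mod_cast congrArg (Int.cast (R := 𝓞 K)) hk
    have hC : θ + (δ' : 𝓞 K) = q * (A * (θ + δ') + k * B) := by
      rw [← hθ] at hk'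
      linear_combination (-(θ + (δ' : 𝓞 K))) * hAB + B * hk'
    set C := A * (θ + δ') + k * B
    obtain ⟨u, v, huv⟩ := qf_coords hx hD hK (algebraMap (𝓞 K) K C)
    have hi : IsIntegral ℤ ((u : K) + (v : K) * algebraMap (𝓞 K) K θ) := by
      rw [← huv]; exact RingOfIntegers.isIntegral_coe _
    obtain ⟨t, ht⟩ := qf_int_trace hx hD hK u v hi
    have hC' : ((δ' : ℚ) : K) + ((1 : ℚ) : K) * algebraMap (𝓞 K) K θ = ((q * u : ℚ) : K) + ((q * v : ℚ) : K) * algebraMap (𝓞 K) K θ := by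
      have := congrArg (algebraMap (𝓞 K) K) hC
      simp only [map_add, map_mul, map_intCast, map_natCast] at this
      rw [huv] at this
      push_cast
      linear_combination this
    have := (qf_unique hx hD _ _ _ _ hC').1
    apply h2'
    refine ⟨t, ?_⟩
    have : (2 * δ' : ℚ) = q * t := by rw [this, ← ht]; ring
    exact_mod_cast this
  obtain ⟨P, hPm, hIP⟩ := Ideal.exists_le_maximal I hI
  have hqP : (q : 𝓞 K) ∈ P := hIP (Ideal.subset_span (by simp))
  have hθP : θ - (δ' : 𝓞 K) ∈ P := hIP (Ideal.subset_span (by simp))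
  let _ : Field (𝓞 K ⧸ P) := Ideal.Quotient.field P
  have : CharP (𝓞 K ⧸ P) q := by
    apply (CharP.charP_iff_prime_eq_zero (Fact.out : q.Prime)).2
    rw [← map_natCast (Ideal.Quotient.mk P)]
    exact Ideal.Quotient.eq_zero_iff_mem.2 hqP
  let ψ : ZMod q →+* 𝓞 K ⧸ P := ZMod.castHom (dvd_refl q) _
  have hθe : Ideal.Quotient.mk P θ = ((δ' : ℤ) : 𝓞 K ⧸ P) := by
    rw [← map_intCast (Ideal.Quotient.mk P)]
    exact Ideal.Quotient.eq.2 hθP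
  have hsurj : Function.Surjective ψ := by
    intro w
    obtain ⟨z, rfl⟩ := Ideal.Quotient.mk_surjective w
    obtain ⟨u, v, huv⟩ := qf_coords hx hD hK (algebraMap (𝓞 K) K z)
    have hi : IsIntegral ℤ ((u : K) + (v : K) * algebraMap (𝓞 K) K θ) := by
      rw [← huv]; exact RingOfIntegers.isIntegral_coe _
    obtain ⟨t, N, s, e1, e2, e3⟩ := qf_int hx hD hK u v hi
    have hz : ((2 * D : ℤ) : 𝓞 K) * z = ((t * D : ℤ) : 𝓞 K) + (s : 𝓞 K) * θ := by
      apply RingOfIntegers.ext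
      simp only [map_add, map_mul, map_intCast]
      rw [huv]
      have e1' : (2 : K) * u = t := by exact_mod_cast congrArg (fun q : ℚ => (q : K)) e1
      have e3' : (2 : K) * v * D = s := by exact_mod_cast congrArg (fun q : ℚ => (q : K)) e3
      push_cast
      rw [← e1', ← e3']; ring
    have hz' := congrArg (Ideal.Quotient.mk P) hz
    simp only [map_add, map_mul, map_intCast] at hz'
    rw [hθe] at hz'
    have hne : ((2 * D : ℤ) : ZMod q) ≠ 0 := by
      intro h
      push_cast at h
      rw [← hδ] at h
      have : (2 * (δ' : ZMod q)) * δ' = 0 := by linear_combination h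
      rcases mul_eq_zero.1 this with h | h
      · exact h2 h
      · exact h2 (by rw [h]; simp)
    refine ⟨((t * D + s * δ' : ℤ) : ZMod q) * (((2 * D : ℤ) : ZMod q))⁻¹, ?_⟩
    rw [map_mul, map_inv₀, map_intCast, map_intCast]
    have hne' : ((2 * D : ℤ) : 𝓞 K ⧸ P) ≠ 0 := by
      rw [← map_intCast ψ]
      exact (map_ne_zero ψ).2 hne
    rw [← div_eq_mul_inv, div_eq_iff hne']
    rw [mul_comm (Ideal.Quotient.mk P z), hz']
    push_cast; ring
  let e : ZMod q ≃+* 𝓞 K ⧸ P := RingEquiv.ofBijective ψ ⟨ψ.injective, hsurj⟩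
  refine ⟨e.symm.toRingHom.comp (Ideal.Quotient.mk P), ?_⟩
  have : e.symm (Ideal.Quotient.mk P θ) = (δ' : ZMod q) := by
    rw [RingEquiv.symm_apply_eq, hθe]
    show _ = ψ _
    simp
  exact this

end field

theorem exists_qf (d : ℤ) (hd : d < 0) : ∃ (K : Type) (_ : Field K) (_ : NumberField K),
    (∃ x : K, x * x = (d : K)) ∧ Module.finrank ℚ K = 2 := by
  have : Fact (∀ r : ℚ, r ^ 2 ≠ (d : ℚ) + 0 * r) := ⟨by
    intro r h
    have : (d : ℚ) < 0 := by exact_mod_cast hd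
    nlinarith [sq_nonneg r]⟩
  have hf : Module.finrank ℚ (QuadraticAlgebra ℚ (d : ℚ) 0) = 2 := QuadraticAlgebra.finrank_eq_two _ _
  have : CharZero (QuadraticAlgebra ℚ (d : ℚ) 0) := charZero_of_injective_algebraMap (algebraMap ℚ _).injective
  have : FiniteDimensional ℚ (QuadraticAlgebra ℚ (d : ℚ) 0) :=
    Module.finite_of_finrank_pos (by rw [hf]; norm_num)
  refine ⟨QuadraticAlgebra ℚ (d : ℚ) 0, inferInstance, ?_, ⟨QuadraticAlgebra.omega, ?_⟩, ?_⟩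
  · constructor
  · ext <;> simp
  · convert hf

theorem group_inj {G : Type*} [CommGroup G] (m : ℕ) (hm : 0 < m) (g1 g2 : G) (h1 : g1 ^ m = 1)
    (h2 : g2 ^ m = 1) (hind : ∀ p : ℕ, p.Prime → p ∣ m → ∀ i j : ℕ,
      (g1 ^ i * g2 ^ j) ^ (m / p) = 1 → p ∣ i ∧ p ∣ j) :
    ∃ f : Multiplicative (ZMod m × ZMod m) →* G, Function.Injective f := by
  have : NeZero m := ⟨hm.ne'⟩
  let F1 : ZMod m →+ Additive G := ZMod.lift m ⟨zmultiplesHom _ (Additive.ofMul g1), by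
    simp; rw [← ofMul_pow, h1]; rfl⟩
  let F2 : ZMod m →+ Additive G := ZMod.lift m ⟨zmultiplesHom _ (Additive.ofMul g2), by
    simp; rw [← ofMul_pow, h2]; rfl⟩
  have hF1 : ∀ k : ℕ, F1 (k : ZMod m) = Additive.ofMul (g1 ^ k) := by
    intro k
    have := ZMod.lift_coe m ⟨zmultiplesHom _ (Additive.ofMul g1), by
      simp; rw [← ofMul_pow, h1]; rfl⟩ (k : ℤ)
    simpa using this
  have hF2 : ∀ k : ℕ, F2 (k : ZMod m) = Additive.ofMul (g2 ^ k) := by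
    intro k
    have := ZMod.lift_coe m ⟨zmultiplesHom _ (Additive.ofMul g2), by
      simp; rw [← ofMul_pow, h2]; rfl⟩ (k : ℤ)
    simpa using this
  let F : ZMod m × ZMod m →+ Additive G := F1.coprod F2
  have hF : Function.Injective F := by
    rw [injective_iff_map_eq_zero]
    rintro ⟨x, y⟩ hxy
    obtain ⟨i, rfl⟩ := ZMod.natCast_zmod_surjective x
    obtain ⟨j, rfl⟩ := ZMod.natCast_zmod_surjective y
    have hij : g1 ^ i * g2 ^ j = 1 := by
      have : F1 (i : ZMod m) + F2 (j : ZMod m) = 0 := by simpa [F] using hxy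
      rw [hF1, hF2, ← ofMul_mul] at this
      exact this
    have key : m ∣ Nat.gcd i j := by
      set e := Nat.gcd (Nat.gcd i j) m with he
      have hepos : 0 < e := Nat.gcd_pos_of_pos_right _ hm
      obtain ⟨m', hm'⟩ : e ∣ m := Nat.gcd_dvd_right _ _
      by_cases hm1 : m' = 1
      · rw [hm1, mul_one] at hm'
        have : e ∣ Nat.gcd i j := Nat.gcd_dvd_left _ _
        rwa [← hm'] at this
      exfalso
      obtain ⟨p, hp, hpm⟩ := Nat.exists_prime_and_dvd hm1
      obtain ⟨i', hi'⟩ : e ∣ i := (Nat.gcd_dvd_left _ _).trans (Nat.gcd_dvd_left _ _)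
      obtain ⟨j', hj'⟩ : e ∣ j := (Nat.gcd_dvd_left _ _).trans (Nat.gcd_dvd_right _ _)
      obtain ⟨m'', hm''⟩ := hpm
      have hdiv : m / p = e * m'' := by
        rw [hm', hm'']
        rw [show e * (p * m'') = p * (e * m'') by ring]
        exact Nat.mul_div_cancel_left _ hp.pos
      have := hind p hp (by rw [hm', hm'']; exact ⟨e * m'', by ring⟩) i' j' (by
        rw [hdiv, pow_mul, mul_pow, ← pow_mul, ← pow_mul, mul_comm i', mul_comm j', ← hi', ← hj', hij, one_pow])
      have hpe : e * p ∣ e := by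
        conv_rhs => rw [he]
        refine Nat.dvd_gcd (Nat.dvd_gcd ?_ ?_) ?_
        · rw [hi']; exact Nat.mul_dvd_mul_left _ this.1
        · rw [hj']; exact Nat.mul_dvd_mul_left _ this.2
        · rw [hm', hm'']; exact Nat.mul_dvd_mul_left _ (dvd_mul_right _ _)
      have := Nat.le_of_dvd hepos hpe
      have := hp.two_le
      nlinarith
    have hi : m ∣ i := key.trans (Nat.gcd_dvd_left _ _)
    have hj : m ∣ j := key.trans (Nat.gcd_dvd_right _ _)
    rw [(ZMod.natCast_eq_zero_iff i m).2 hi, (ZMod.natCast_eq_zero_iff j m).2 hj]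
    rfl
  exact ⟨AddMonoidHom.toMultiplicativeLeft F, hF⟩

theorem class_inj {A : Type*} [CommRing A] [IsDedekindDomain A] (m : ℕ) (hm : 0 < m)
    (α1 α2 : A) (B1 B2 : Ideal A) (h1 : α1 ≠ 0) (h2 : α2 ≠ 0)
    (hB1 : Ideal.span {α1} = B1 ^ m) (hB2 : Ideal.span {α2} = B2 ^ m)
    (hind : ∀ p : ℕ, p.Prime → p ∣ m → ∀ i j : ℕ,
      ∀ (ε : Aˣ) (β : A), α1 ^ i * α2 ^ j = ε * β ^ p → p ∣ i ∧ p ∣ j) :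
    ∃ f : Multiplicative (ZMod m × ZMod m) →* ClassGroup A, Function.Injective f := by
  have ne1 : B1 ≠ ⊥ := by
    rintro rfl
    rw [← Ideal.zero_eq_bot, zero_pow hm.ne', Ideal.zero_eq_bot, Ideal.span_singleton_eq_bot] at hB1
    exact h1 hB1
  have ne2 : B2 ≠ ⊥ := by
    rintro rfl
    rw [← Ideal.zero_eq_bot, zero_pow hm.ne', Ideal.zero_eq_bot, Ideal.span_singleton_eq_bot] at hB2
    exact h2 hB2
  let C1 : nonZeroDivisors (Ideal A) := ⟨B1, mem_nonZeroDivisors_of_ne_zero ne1⟩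
  let C2 : nonZeroDivisors (Ideal A) := ⟨B2, mem_nonZeroDivisors_of_ne_zero ne2⟩
  apply group_inj m hm (ClassGroup.mk0 C1) (ClassGroup.mk0 C2)
  · rw [← map_pow, ClassGroup.mk0_eq_one_iff]
    show (B1 ^ m).IsPrincipal
    rw [← hB1]; exact ⟨⟨_, rfl⟩⟩
  · rw [← map_pow, ClassGroup.mk0_eq_one_iff]
    show (B2 ^ m).IsPrincipal
    rw [← hB2]; exact ⟨⟨_, rfl⟩⟩
  · intro p hp hpm i j h
    rw [← map_pow, ← map_pow, ← map_mul, ← map_pow, ClassGroup.mk0_eq_one_iff] at h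
    have h' : (((B1 ^ i * B2 ^ j) ^ (m / p) : Ideal A)).IsPrincipal := h
    obtain ⟨β, hβ⟩ := h'.principal
    have hβ' : (B1 ^ i * B2 ^ j) ^ (m / p) = Ideal.span {β} := hβ
    have e : Ideal.span {α1 ^ i * α2 ^ j} = Ideal.span {β ^ p} := by
      rw [← Ideal.span_singleton_mul_span_singleton, ← Ideal.span_singleton_pow,
        ← Ideal.span_singleton_pow, ← Ideal.span_singleton_pow, hB1, hB2, ← hβ', ← pow_mul, ← pow_mul, ← pow_mul,
        Nat.div_mul_cancel hpm, mul_pow, ← pow_mul, ← pow_mul, mul_comm i, mul_comm j]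
    obtain ⟨u, hu⟩ := Ideal.span_singleton_eq_span_singleton.1 e
    refine hind p hp hpm i j u⁻¹ β ?_
    rw [← hu, mul_comm _ (u : A), ← mul_assoc, Units.inv_mul, one_mul]

theorem ideal_pow_of {A : Type*} [CommRing A] [IsDedekindDomain A] (m k : ℕ)
    (x y : A) (a T : ℤ) (hxy : x * y = (a : A) ^ (m * k)) (hsum : x + y = (T : A)) (hc : IsCoprime (a) T) :
    ∃ B : Ideal A, Ideal.span {x} = B ^ m := by
  have hcop : IsCoprime (Ideal.span {x}) (Ideal.span {y}) := by
    rw [Ideal.isCoprime_iff_exists]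
    obtain ⟨u, v, huv⟩ := (hc.pow_left (m := m * k))
    refine ⟨x * (v + u * y), Ideal.mem_span_singleton.2 (dvd_mul_right _ _), y * v, Ideal.mem_span_singleton.2 (dvd_mul_right _ _), ?_⟩
    have : (u : A) * a ^ (m * k) + v * T = 1 := by exact_mod_cast congrArg (Int.cast (R := A)) huv
    rw [← this, ← hxy, ← hsum]; ring
  have hmul : Ideal.span {x} * Ideal.span {y} = (Ideal.span {(a : A) ^ k}) ^ m := by
    rw [Ideal.span_singleton_mul_span_singleton, hxy, Ideal.span_singleton_pow, ← pow_mul, mul_comm k]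
  have := exists_eq_pow_of_mul_eq_pow_of_coprime (hcop) hmul
  exact this

theorem eval_pow {A : Type*} [CommRing A] (m p q : ℕ) [Fact q.Prime] (hp : p.Prime) (hpm : p ∣ m)
    (hq : 12 * m ∣ q - 1) (φ : A →+* ZMod q) (α1 α2 β : A) (ε : Aˣ) (hε : ε ^ 12 = 1)
    (i j : ℕ) (h : α1 ^ i * α2 ^ j = ε * β ^ p) (h1 : φ α1 ≠ 0) (h2 : φ α2 ≠ 0) :
    (φ α1 ^ i * φ α2 ^ j) ^ ((q - 1) / p) = 1 := by
  have h' := congrArg φ h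
  simp only [map_mul, map_pow] at h'
  have hβ : φ β ≠ 0 := by
    intro h0
    rw [h0, zero_pow hp.pos.ne', mul_zero] at h'
    exact mul_ne_zero (pow_ne_zero _ h1) (pow_ne_zero _ h2) h'
  obtain ⟨m', rfl⟩ := hpm
  obtain ⟨k, hk⟩ := hq
  have hdiv : (q - 1) / p = 12 * (m' * k) := by
    rw [hk, show 12 * (p * m') * k = p * (12 * (m' * k)) by ring]
    exact Nat.mul_div_cancel_left _ hp.pos
  have hdiv' : p * ((q - 1) / p) = q - 1 := by
    rw [hdiv, hk]; ring
  rw [h', mul_pow, ← pow_mul, hdiv', ZMod.pow_card_sub_one_eq_one hβ, mul_one, hdiv, pow_mul]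
  have : φ (ε : A) ^ 12 = 1 := by
    rw [← map_pow, ← Units.val_pow_eq_pow_val, hε]; simp
  rw [this, one_pow]

theorem order_dvd_int {q p : ℕ} [Fact q.Prime] (hp : 0 < p) (hpq : p ∣ q - 1) (g : ZMod q)
    (hg : orderOf g = q - 1) (k : ℕ) (h : g ^ (k * ((q - 1) / p)) = 1) : p ∣ k := by
  have := orderOf_dvd_of_pow_eq_one h
  rw [hg] at this
  obtain ⟨t, ht⟩ := hpq
  have hq : 0 < q - 1 := by
    have := (Fact.out : q.Prime).two_le; omega
  have htpos : 0 < t := by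
    rcases Nat.eq_zero_or_pos t with h | h
    · rw [h] at ht; omega
    · exact h
  rw [ht, Nat.mul_div_cancel_left _ hp] at this
  exact Nat.dvd_of_mul_dvd_mul_right htpos this

theorem gen_ne_zero {q : ℕ} [Fact q.Prime] (g : ZMod q) (hg : orderOf g = q - 1) : g ≠ 0 := by
  rintro rfl
  have hq : 0 < q - 1 := by
    have := (Fact.out : q.Prime).two_le; omega
  have := pow_orderOf_eq_one (0 : ZMod q)
  rw [hg, zero_pow hq.ne'] at this
  exact zero_ne_one this

/-- local data at a split prime -/
def Row (D A1 A2 : ℤ) (q : ℕ) (P : ZMod q → ZMod q → Prop) : Prop :=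
  ∃ δ : ZMod q, δ * δ = (D : ZMod q) ∧ 2 * δ ≠ 0 ∧ P ((A1 : ZMod q) + 2 * δ) ((A2 : ZMod q) + 2 * δ)

theorem master {K : Type} [Field K] [NumberField K] {θ : 𝓞 K} {D : ℤ}
    (hθ : θ * θ = (D : 𝓞 K)) (hD : D < 0) (hK : Module.finrank ℚ K = 2)
    (m n : ℕ) (hm : 1 < m) (hmn : m ∣ 2 * n) (W R S a b : ℤ)
    (h1 : W * R + S = a ^ n) (h2 : R + W * S = b ^ n) (hDeq : D = -(W * R * S))
    (ha : IsCoprime a (2 * S)) (hb : IsCoprime b (2 * R))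
    (r1 : ∃ q : ℕ, ∃ _ : Fact q.Prime, 12 * m ∣ q - 1 ∧ ∃ g : ZMod q, orderOf g = q - 1 ∧
      Row D (W * R - S) (R - W * S) q (fun x y => x = g ∧ y = g))
    (r2 : ∃ q : ℕ, ∃ _ : Fact q.Prime, 12 * m ∣ q - 1 ∧ ∃ g : ZMod q, orderOf g = q - 1 ∧
      Row D (W * R - S) (R - W * S) q (fun x y => x * g = -1 ∧ y = g))
    (r3 : 2 ∣ m → ∃ q : ℕ, ∃ _ : Fact q.Prime, 12 * m ∣ q - 1 ∧
      Row D (W * R - S) (R - W * S) q (fun x y => x ≠ 0 ∧ y ≠ 0 ∧ ¬ IsSquare (x * y))) :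
    ∃ f : Multiplicative (ZMod m × ZMod m) →* ClassGroup (𝓞 K), Function.Injective f := by
  obtain ⟨k, hk⟩ := hmn
  have hn0 : 0 < 2 * n ∨ n = 0 := by omega
  have hx : algebraMap (𝓞 K) K θ * algebraMap (𝓞 K) K θ = (D : K) := by
    rw [← map_mul, hθ]; simp
  set α1 : 𝓞 K := ((W * R - S : ℤ) : 𝓞 K) + 2 * θ with hα1
  set α2 : 𝓞 K := ((R - W * S : ℤ) : 𝓞 K) + 2 * θ with hα2
  have c1 : ((W * R + S : ℤ) : 𝓞 K) = ((a ^ n : ℤ) : 𝓞 K) := by rw [h1]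
  have c2 : ((R + W * S : ℤ) : 𝓞 K) = ((b ^ n : ℤ) : 𝓞 K) := by rw [h2]
  have hθ' : θ * θ = -((W : 𝓞 K) * R * S) := by rw [hθ, hDeq]; push_cast; ring
  push_cast at c1 c2
  have n1 : α1 * (((W * R - S : ℤ) : 𝓞 K) - 2 * θ) = (a : 𝓞 K) ^ (m * k) := by
    rw [← hk, two_mul n, pow_add, ← c1, hα1]; push_cast
    linear_combination (-4) * hθ'
  have n2 : α2 * (((R - W * S : ℤ) : 𝓞 K) - 2 * θ) = (b : 𝓞 K) ^ (m * k) := by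
    rw [← hk, two_mul n, pow_add, ← c2, hα2]; push_cast
    linear_combination (-4) * hθ'
  have hnpos : 0 < n ∨ n = 0 := by omega
  have ic1 : IsCoprime a (2 * (W * R - S)) := by
    rcases hnpos with hnp | hnp
    · have e : 2 * (W * R - S) = -(2 * (2 * S)) + a * (2 * a ^ (n - 1)) := by
        have : a * a ^ (n - 1) = a ^ n := by rw [← pow_succ', Nat.sub_add_cancel hnp]
        linear_combination 2 * h1 - 2 * this
      rw [e]
      refine IsCoprime.add_mul_left_right ?_ _
      exact (IsCoprime.mul_right ha.of_mul_right_left ha).neg_right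
    · rw [hnp] at hk h1 h2
      simp at hk h1 h2
      rcases hk with hk | hk
      · omega
      have hDW : W * R * S > 0 := by linarith
      exfalso
      have e1 : S = 1 - W * R := by linarith
      rw [e1] at h2 hDW
      have e3 : (W - 1) * ((W + 1) * R - 1) = 0 := by linear_combination -h2
      rcases mul_eq_zero.1 e3 with h | h
      · have : W = 1 := by linarith
        subst this
        have : R * (1 - R) > 0 := by linarith
        have h5 : 0 < R ∨ R ≤ 0 := by omega
        rcases h5 with h5 | h5 <;> nlinarith
      · have h6 : (W + 1) * R = 1 := by linarith
        rcases Int.eq_one_or_neg_one_of_mul_eq_one' h6 with ⟨h7, h8⟩ | ⟨h7, h8⟩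
        · have : W = 0 := by linarith
          subst this; simp at hDW
        · have : W = -2 := by linarith
          subst this; subst h8; simp at hDW
  have ic2 : IsCoprime b (2 * (R - W * S)) := by
    rcases hnpos with hnp | hnp
    · have e : 2 * (R - W * S) = (2 * (2 * R)) + b * (-2 * b ^ (n - 1)) := by
        have : b * b ^ (n - 1) = b ^ n := by rw [← pow_succ', Nat.sub_add_cancel hnp]
        linear_combination (-2) * h2 + 2 * this
      rw [e]
      refine IsCoprime.add_mul_left_right ?_ _
      exact (IsCoprime.mul_right hb.of_mul_right_left hb)
    · rw [hnp] at hk h1 h2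
      simp at hk h1 h2
      rcases hk with hk | hk
      · omega
      have hDW : W * R * S > 0 := by linarith
      exfalso
      have e1 : S = 1 - W * R := by linarith
      rw [e1] at h2 hDW
      have e3 : (W - 1) * ((W + 1) * R - 1) = 0 := by linear_combination -h2
      rcases mul_eq_zero.1 e3 with h | h
      · have : W = 1 := by linarith
        subst this
        have : R * (1 - R) > 0 := by linarith
        have h5 : 0 < R ∨ R ≤ 0 := by omega
        rcases h5 with h5 | h5 <;> nlinarith
      · have h6 : (W + 1) * R = 1 := by linarith
        rcases Int.eq_one_or_neg_one_of_mul_eq_one' h6 with ⟨h7, h8⟩ | ⟨h7, h8⟩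
        · have : W = 0 := by linarith
          subst this; simp at hDW
        · have : W = -2 := by linarith
          subst this; subst h8; simp at hDW
  obtain ⟨B1, hB1⟩ := ideal_pow_of m k α1 _ a (2 * (W * R - S)) n1 (by rw [hα1]; push_cast; ring) ic1
  obtain ⟨B2, hB2⟩ := ideal_pow_of m k α2 _ b (2 * (R - W * S)) n2 (by rw [hα2]; push_cast; ring) ic2
  have row : ∀ (q : ℕ) [Fact q.Prime] (P : ZMod q → ZMod q → Prop),
      Row D (W * R - S) (R - W * S) q P → ∃ φ : 𝓞 K →+* ZMod q, P (φ α1) (φ α2) := by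
    intro q _ P ⟨δ, h1, h2, h3⟩
    obtain ⟨φ, hφ⟩ := qf_hom hθ hD hK q δ h1 h2
    refine ⟨φ, ?_⟩
    rw [hα1, hα2, map_add, map_add, map_mul, hφ, map_intCast, map_intCast]
    have e2 : φ 2 = 2 := map_ofNat φ 2
    rw [e2]
    simpa using h3
  obtain ⟨q1, _, hq1, g, hg, hr1⟩ := r1
  obtain ⟨φ1, e11, e12⟩ := row q1 _ hr1
  obtain ⟨q2, _, hq2, g', hg', hr2⟩ := r2
  obtain ⟨φ2, e21, e22⟩ := row q2 _ hr2
  have hg0 := gen_ne_zero g hg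
  have hg0' := gen_ne_zero g' hg'
  have hα10 : α1 ≠ 0 := by
    intro h; rw [h, map_zero] at e11; exact hg0 e11.symm
  have hα20 : α2 ≠ 0 := by
    intro h; rw [h, map_zero] at e12; exact hg0 e12.symm
  apply class_inj m (by omega) α1 α2 B1 B2 hα10 hα20 hB1 hB2
  intro p hp hpm i j ε β hε
  have hunit := qf_unit hx hD hK ε
  have pdvd : ∀ q : ℕ, 12 * m ∣ q - 1 → 12 * p ∣ q - 1 := fun q hq =>
    (Nat.mul_dvd_mul_left 12 hpm).trans hq
  have A := eval_pow m p q1 hp hpm hq1 φ1 α1 α2 β ε hunit i j hε (by rw [e11]; exact hg0) (by rw [e12]; exact hg0)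
  rw [e11, e12, ← pow_add, ← pow_mul] at A
  have A' := order_dvd_int hp.pos ((dvd_mul_left _ _).trans (pdvd _ hq1)) g hg _ A
  have h2ne : φ2 α1 ≠ 0 := by
    intro h; rw [h, zero_mul] at e21
    exact (neg_ne_zero.2 one_ne_zero) e21.symm
  have B := eval_pow m p q2 hp hpm hq2 φ2 α1 α2 β ε hunit i j hε h2ne (by rw [e22]; exact hg0')
  have B' : (p : ℤ) ∣ (j : ℤ) - i := by
    obtain ⟨t, ht⟩ := pdvd q2 hq2
    have hdiv : (q2 - 1) / p = 2 * (6 * t) := by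
      rw [ht, show 12 * p * t = p * (2 * (6 * t)) by ring]
      exact Nat.mul_div_cancel_left _ hp.pos
    have C : g' ^ (j * ((q2 - 1) / p)) = g' ^ (i * ((q2 - 1) / p)) := by
      have hh : (φ2 α1 * g') ^ (i * ((q2 - 1) / p)) = 1 := by
        rw [e21, hdiv, mul_left_comm, pow_mul]; simp
      rw [e22, mul_pow, ← pow_mul, ← pow_mul] at B
      rw [mul_pow] at hh
      have hne := pow_ne_zero (i * ((q2 - 1) / p)) h2ne
      apply mul_left_cancel₀ hne
      rw [B, hh]
    rcases le_total i j with hij | hij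
    · obtain ⟨l, rfl⟩ := Nat.exists_eq_add_of_le hij
      rw [add_mul, pow_add] at C
      have : g' ^ (l * ((q2 - 1) / p)) = 1 := by
        apply mul_left_cancel₀ (pow_ne_zero (i * ((q2 - 1) / p)) hg0')
        rw [C, mul_one]
      have := order_dvd_int hp.pos ((dvd_mul_left _ _).trans (pdvd _ hq2)) g' hg' _ this
      push_cast; simpa using Int.natCast_dvd_natCast.2 this
    · obtain ⟨l, rfl⟩ := Nat.exists_eq_add_of_le hij
      rw [add_mul, pow_add] at C
      have : g' ^ (l * ((q2 - 1) / p)) = 1 := by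
        apply mul_left_cancel₀ (pow_ne_zero (j * ((q2 - 1) / p)) hg0')
        rw [← C, mul_one]
      have := order_dvd_int hp.pos ((dvd_mul_left _ _).trans (pdvd _ hq2)) g' hg' _ this
      push_cast; simpa using Int.natCast_dvd_natCast.2 this
  have A'' : (p : ℤ) ∣ (i : ℤ) + j := by exact_mod_cast A'
  rcases hp.eq_two_or_odd' with rfl | hodd
  · obtain ⟨q3, _, hq3, hr3⟩ := r3 hpm
    obtain ⟨φ3, n1, n2, n3⟩ := row q3 _ hr3
    have C := eval_pow m 2 q3 hp hpm hq3 φ3 α1 α2 β ε hunit i j hε n1 n2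
    by_contra hcon
    have hi : i % 2 = 1 := by omega
    have hj : j % 2 = 1 := by omega
    obtain ⟨t, ht⟩ := pdvd q3 hq3
    have h32 : (q3 - 1) / 2 = q3 / 2 := by omega
    rw [h32] at C
    have hne : φ3 α1 ^ i * φ3 α2 ^ j ≠ 0 := mul_ne_zero (pow_ne_zero _ n1) (pow_ne_zero _ n2)
    have hsq := (ZMod.euler_criterion q3 hne).2 C
    apply n3
    obtain ⟨i', rfl⟩ : ∃ i', i = 2 * i' + 1 := ⟨i / 2, by omega⟩
    obtain ⟨j', rfl⟩ : ∃ j', j = 2 * j' + 1 := ⟨j / 2, by omega⟩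
    obtain ⟨s, hs⟩ := hsq
    refine ⟨s / (φ3 α1 ^ i' * φ3 α2 ^ j'), ?_⟩
    have d1 := pow_ne_zero i' n1
    have d2 := pow_ne_zero j' n2
    field_simp
    rw [pow_two s, ← hs]; ring
  · have h2j : (p : ℤ) ∣ 2 * j := by
      have := dvd_add A'' B'
      ring_nf at this ⊢; exact this
    have h2j' : p ∣ 2 * j := by exact_mod_cast h2j
    have hj : p ∣ j := by
      rcases (hp.dvd_mul).1 h2j' with h | h
      · exfalso
        have := (Nat.prime_dvd_prime_iff_eq hp Nat.prime_two).1 h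
        rw [this] at hodd; exact absurd hodd (by decide)
      · exact h
    exact ⟨(Nat.dvd_add_left hj).1 A', hj⟩

theorem exists_gen (q : ℕ) [Fact q.Prime] : ∃ g : ZMod q, orderOf g = q - 1 := by
  obtain ⟨g, hg⟩ := IsCyclic.exists_generator (α := (ZMod q)ˣ)
  refine ⟨(g : ZMod q), ?_⟩
  rw [orderOf_units, orderOf_eq_card_of_forall_mem_zpowers hg, Nat.card_eq_fintype_card, ZMod.card_units]

theorem gen_sq_ne {q : ℕ} [Fact q.Prime] (hq : 4 < q) (g : ZMod q) (hg : orderOf g = q - 1) : g ^ 2 ≠ 1 := by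
  intro h
  have := Nat.le_of_dvd (by norm_num) (orderOf_dvd_of_pow_eq_one h)
  omega

theorem two_ne_zmod {q : ℕ} [Fact q.Prime] (hq : 4 < q) : (2 : ZMod q) ≠ 0 := by
  intro h
  have : ((2 : ℕ) : ZMod q) = 0 := by exact_mod_cast h
  rw [ZMod.natCast_eq_zero_iff] at this
  have := Nat.le_of_dvd (by norm_num) this
  omega

theorem row1_R (q : ℕ) [Fact q.Prime] (hq : 4 < q) : ∃ R0 : ℤ, ∀ W R S : ℤ, (W : ZMod q) = 1 →
    (R : ZMod q) = R0 → (S : ZMod q) = 1 - W * R0 → ∃ g : ZMod q, orderOf g = q - 1 ∧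
      Row (-(W * R * S)) (W * R - S) (R - W * S) q (fun x y => x = g ∧ y = g) := by
  obtain ⟨g, hg⟩ := exists_gen q
  have hg0 := gen_ne_zero g hg
  have hg2 := gen_sq_ne hq g hg
  have h2 := two_ne_zmod hq
  have h4 : (4 : ZMod q) ≠ 0 := by
    have : (4 : ZMod q) = 2 * 2 := by norm_num
    rw [this]; exact mul_ne_zero h2 h2
  obtain ⟨R0, hR0⟩ := ZMod.intCast_surjective ((g + 1) ^ 2 / (4 * g))
  refine ⟨R0, fun W R S hW hR hS => ⟨g, hg, (g ^ 2 - 1) / (4 * g), ?_, ?_, ?_, ?_⟩⟩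
  · push_cast
    rw [hS, hR, hW, hR0]
    field_simp
    ring
  · apply mul_ne_zero h2
    apply div_ne_zero (sub_ne_zero.2 hg2) (mul_ne_zero h4 hg0)
  · push_cast
    rw [hS, hR, hW, hR0]
    field_simp
    ring
  · push_cast
    rw [hS, hR, hW, hR0]
    field_simp
    ring

theorem row2_R (q : ℕ) [Fact q.Prime] (hq : 4 < q) : ∃ R0 : ℤ, ∀ W R S : ℤ, (W : ZMod q) = -1 →
    (R : ZMod q) = R0 → (S : ZMod q) = 1 - W * R0 → ∃ g : ZMod q, orderOf g = q - 1 ∧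
      Row (-(W * R * S)) (W * R - S) (R - W * S) q (fun x y => x * g = -1 ∧ y = g) := by
  obtain ⟨g, hg⟩ := exists_gen q
  have hg0 := gen_ne_zero g hg
  have hg2 := gen_sq_ne hq g hg
  have h2 := two_ne_zmod hq
  have h4 : (4 : ZMod q) ≠ 0 := by
    have : (4 : ZMod q) = 2 * 2 := by norm_num
    rw [this]; exact mul_ne_zero h2 h2
  obtain ⟨R0, hR0⟩ := ZMod.intCast_surjective ((g - 1) ^ 2 / (4 * g))
  refine ⟨R0, fun W R S hW hR hS => ⟨g, hg, (g ^ 2 - 1) / (4 * g), ?_, ?_, ?_, ?_⟩⟩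
  · push_cast
    rw [hS, hR, hW, hR0]
    field_simp
    ring
  · apply mul_ne_zero h2
    apply div_ne_zero (sub_ne_zero.2 hg2) (mul_ne_zero h4 hg0)
  · push_cast
    rw [hS, hR, hW, hR0]
    field_simp
    ring
  · push_cast
    rw [hS, hR, hW, hR0]
    field_simp
    ring

theorem row3_R (q : ℕ) [Fact q.Prime] (hq : 4 < q) (W R S : ℤ) (hW : ¬ IsSquare (W : ZMod q))
    (hm1 : IsSquare (-1 : ZMod q)) (h1 : (W * R + S : ZMod q) = 1) (h2 : (R + W * S : ZMod q) = 0) :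
    Row (-(W * R * S)) (W * R - S) (R - W * S) q (fun x y => x ≠ 0 ∧ y ≠ 0 ∧ ¬ IsSquare (x * y)) := by
  have t2 := two_ne_zmod hq
  set w : ZMod q := (W : ZMod q) with hw
  have w0 : w ≠ 0 := by rintro h; rw [h] at hW; exact hW ⟨0, by simp⟩
  have w1 : w - 1 ≠ 0 := by
    intro h; rw [sub_eq_zero.1 h] at hW; exact hW ⟨1, by simp⟩
  have w2 : w + 1 ≠ 0 := by
    intro h; rw [eq_neg_of_add_eq_zero_left h] at hW; exact hW hm1
  have hE : w ^ 2 - 1 ≠ 0 := by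
    have : w ^ 2 - 1 = (w - 1) * (w + 1) := by ring
    rw [this]; exact mul_ne_zero w1 w2
  have hR : (R : ZMod q) = w / (w ^ 2 - 1) := by
    rw [eq_div_iff hE]; linear_combination w * h1 - h2
  have hS : (S : ZMod q) = -1 / (w ^ 2 - 1) := by
    rw [eq_div_iff hE]; linear_combination w * h2 - h1
  have x1 : w * R - S + 2 * (R : ZMod q) = (w + 1) / (w - 1) := by
    rw [hR, hS]
    have : w ^ 2 - 1 = (w - 1) * (w + 1) := by ring
    rw [this]
    field_simp
    ring
  have x2 : (R : ZMod q) - w * S + 2 * (R : ZMod q) = 2 * 2 * w / ((w - 1) * (w + 1)) := by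
    rw [hR, hS]
    have : w ^ 2 - 1 = (w - 1) * (w + 1) := by ring
    rw [this]
    field_simp
    ring
  refine ⟨R, ?_, ?_, ?_, ?_, ?_⟩
  · push_cast; linear_combination (R : ZMod q) * h2
  · rw [hR]; exact mul_ne_zero t2 (div_ne_zero w0 hE)
  · push_cast; rw [x1]; exact div_ne_zero w2 w1
  · push_cast; rw [x2]; exact div_ne_zero (mul_ne_zero (mul_ne_zero t2 t2) w0) (mul_ne_zero w1 w2)
  · push_cast; rw [x1, x2]
    rintro ⟨s, hs⟩
    apply hW
    refine ⟨s * (w - 1) / 2, ?_⟩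
    field_simp at hs ⊢
    rw [← hs]
    try field_simp

theorem hensel_lite (q n : ℕ) (hq : q.Prime) (ξ t : ℤ) (h1 : ¬ (q : ℤ) ∣ ξ) (h2 : ¬ q ∣ n)
    (h : (q : ℤ) ∣ ξ ^ n - t) : ∃ b : ℤ, (q : ℤ) ^ 2 ∣ b ^ n - t := by
  obtain ⟨s, hs⟩ := h
  have hqp : Prime (q : ℤ) := Nat.prime_iff_prime_int.1 hq
  have hc : IsCoprime ((n : ℤ) * ξ ^ (n - 1)) (q : ℤ) := by
    refine IsCoprime.symm ((Prime.coprime_iff_not_dvd hqp).2 ?_)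
    intro h
    rcases hqp.dvd_or_dvd h with h | h
    · exact h2 (by exact_mod_cast h)
    · exact h1 (hqp.dvd_of_dvd_pow h)
  obtain ⟨u, v, huv⟩ := hc
  obtain ⟨k, hk⟩ := Polynomial.powAddExpansion ξ ((q : ℤ) * (-(u * s))) n
  refine ⟨ξ + (q : ℤ) * (-(u * s)), ?_⟩
  rw [hk]
  refine ⟨v * s + k * (-(u * s)) ^ 2, ?_⟩
  linear_combination hs - (q : ℤ) * s * huv

theorem crt2 {x y : ℤ} (h : IsCoprime x y) (a b : ℤ) : ∃ z : ℤ, x ∣ z - a ∧ y ∣ z - b := by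
  obtain ⟨u, v, huv⟩ := h
  refine ⟨a * (v * y) + b * (u * x), ⟨u * (b - a), ?_⟩, ⟨v * (a - b), ?_⟩⟩
  · linear_combination a * huv
  · linear_combination b * huv

def Good (m n : ℕ) (W M b0 : ℤ) : Prop := ∀ a b : ℤ, M ∣ a - 1 → M ∣ b - b0 → IsCoprime a b →
  b ^ n < W * a ^ n → a ^ n < W * b ^ n → ∃ R S : ℤ, 0 < R ∧ 0 < S ∧ W * R + S = a ^ n ∧
    R + W * S = b ^ n ∧ ∀ d y : ℤ, -(W * R * S) = d * (y * y) → d < 0 →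
      ∀ (K : Type) [Field K] [NumberField K], (∃ x : K, x * x = (d : K)) → Module.finrank ℚ K = 2 →
        ∃ f : Multiplicative (ZMod m × ZMod m) →* ClassGroup (𝓞 K), Function.Injective f

theorem local_R (q : ℕ) (hq : q.Prime) (n : ℕ) (W E E' R R0 S a b b0 : ℤ) (hE : E = q * E')
    (hE' : ¬ (q : ℤ) ∣ E') (ha : (q : ℤ) ^ 2 ∣ a - 1) (hb : (q : ℤ) ^ 2 ∣ b - b0)
    (hb0 : (q : ℤ) ^ 2 ∣ b0 ^ n - (W - E * R0)) (h1 : E * R = W * a ^ n - b ^ n)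
    (h2 : W * R + S = a ^ n) : (R : ZMod q) = R0 ∧ (S : ZMod q) = 1 - W * R0 := by
  have hqp : Prime (q : ℤ) := Nat.prime_iff_prime_int.1 hq
  have e1 : (q : ℤ) ^ 2 ∣ a ^ n - 1 := ha.trans (by simpa using sub_dvd_pow_sub_pow a 1 n)
  have e2 : (q : ℤ) ^ 2 ∣ b ^ n - b0 ^ n := hb.trans (sub_dvd_pow_sub_pow b b0 n)
  have e3 : (q : ℤ) ^ 2 ∣ E * (R - R0) := by
    have : E * (R - R0) = W * (a ^ n - 1) - (b ^ n - b0 ^ n) - (b0 ^ n - (W - E * R0)) := by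
      linear_combination h1
    rw [this]
    exact dvd_sub (dvd_sub (e1.mul_left _) e2) hb0
  have e4 : (q : ℤ) ∣ R - R0 := by
    rw [hE, pow_two, mul_assoc] at e3
    have := (mul_dvd_mul_iff_left (hqp.ne_zero)).1 e3
    exact (hqp.dvd_or_dvd this).resolve_left hE'
  have e5 : (R : ZMod q) = R0 := by
    have := (ZMod.intCast_zmod_eq_zero_iff_dvd _ q).2 e4
    push_cast at this
    exact sub_eq_zero.1 this
  refine ⟨e5, ?_⟩
  have e6 : (a : ZMod q) ^ n = 1 := by
    have := (ZMod.intCast_zmod_eq_zero_iff_dvd _ q).2 ((dvd_pow_self (q : ℤ) two_ne_zero).trans e1)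
    push_cast at this
    exact sub_eq_zero.1 this
  have e7 : ((W * R + S : ℤ) : ZMod q) = ((a ^ n : ℤ) : ZMod q) := by rw [h2]
  push_cast at e7
  rw [e6] at e7
  rw [← e5]; linear_combination e7

theorem exists_nth_neg_one (q n : ℕ) [Fact q.Prime] (hn : 2 * n ∣ q - 1) : ∃ ξ : ℤ, (ξ : ZMod q) ^ n = -1 := by
  obtain ⟨g, hg⟩ := exists_gen q
  obtain ⟨k, hk⟩ := hn
  have hq2 := (Fact.out : q.Prime).two_le
  obtain ⟨ξ, hξ⟩ := ZMod.intCast_surjective (g ^ k)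
  refine ⟨ξ, ?_⟩
  rw [hξ]
  have hsq : ((g ^ k) ^ n) ^ 2 = 1 := by
    rw [← pow_mul, ← pow_mul, show k * (n * 2) = 2 * n * k by ring, ← hk, ← hg, pow_orderOf_eq_one]
  rcases (sq_eq_sq_iff_eq_or_eq_neg.1 (hsq.trans (one_pow 2).symm)) with h | h
  · exfalso
    rw [← pow_mul] at h
    have h3 := orderOf_dvd_of_pow_eq_one h
    rw [hg, hk] at h3
    have hkn : 0 < k * n := by
      rcases Nat.eq_zero_or_pos (k * n) with h0 | h0
      · have : 2 * n * k = 0 := by rw [mul_assoc, mul_comm n, h0, mul_zero]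
        omega
      · exact h0
    have := Nat.le_of_dvd hkn h3
    nlinarith
  · exact h

theorem setup_exists (m n : ℕ) (hm : 1 < m) (hnm : n ∣ m) (hmn : m ∣ 2 * n) (W E' Q r : ℤ) (q1 q2 : ℕ)
    (hW2 : 2 ∣ W) (hW : 2 ≤ W) (hq1 : q1.Prime) (hq2 : q2.Prime) (hq1m : 12 * m ∣ q1 - 1)
    (hq2m : 12 * m ∣ q2 - 1) (hE : (q1 : ℤ) * q2 * E' = W ^ 2 - 1) (hne : q1 ≠ q2)
    (hE1 : ¬ (q1 : ℤ) ∣ E') (hE2 : ¬ (q2 : ℤ) ∣ E') (hWq1 : (q1 : ℤ) ∣ W - 1) (hWq2 : (q2 : ℤ) ∣ W + 1)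
    (hr : E' ∣ W * r ^ n - 1) (hQ0 : 0 < Q) (hQc : IsCoprime Q (W * (W ^ 2 - 1)))
    (hQ : 2 ∣ m → ∃ q3 : ℕ, ∃ _ : Fact q3.Prime, Q = q3 ∧ 12 * m ∣ q3 - 1 ∧ ¬ IsSquare (W : ZMod q3)) :
    ∃ M b0 : ℤ, 0 < M ∧ W ∣ M ∧ (W ^ 2 - 1) ∣ M ∧ W ∣ b0 - 1 ∧ Good m n W M b0 := by
  have : Fact q1.Prime := ⟨hq1⟩
  have : Fact q2.Prime := ⟨hq2⟩
  have hm0 : 0 < m := by omega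
  have hn0 : 0 < n := Nat.pos_of_dvd_of_pos hnm hm0
  have hnlem : n ≤ m := Nat.le_of_dvd hm0 hnm
  have big : ∀ q : ℕ, q.Prime → 12 * m ∣ q - 1 → 12 * m < q := by
    intro q hq h
    have := Nat.le_of_dvd (by have := hq.two_le; omega) h
    omega
  have hb1 := big q1 hq1 hq1m
  have hb2 := big q2 hq2 hq2m
  have p1 : Prime (q1 : ℤ) := Nat.prime_iff_prime_int.1 hq1
  have p2 : Prime (q2 : ℤ) := Nat.prime_iff_prime_int.1 hq2
  set E := W ^ 2 - 1 with hEdef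
  obtain ⟨R1, hR1⟩ := row1_R q1 (by omega)
  obtain ⟨R2, hR2⟩ := row2_R q2 (by omega)
  have q1E : (q1 : ℤ) ∣ E := ⟨q2 * E', by rw [← hE]; ring⟩
  have q2E : (q2 : ℤ) ∣ E := ⟨q1 * E', by rw [← hE]; ring⟩
  have E'E : E' ∣ E := ⟨q1 * q2, by rw [← hE]; ring⟩
  have hEpos : 0 < E := by rw [hEdef]; nlinarith
  -- Hensel
  obtain ⟨β1, hβ1⟩ := hensel_lite q1 n hq1 1 (W - E * R1) (by
      intro h; exact p1.not_isUnit (isUnit_of_dvd_one h)) (by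
      intro h; have := Nat.le_of_dvd hn0 h; omega) (by
      rw [one_pow]
      have : 1 - (W - E * R1) = E * R1 - (W - 1) := by ring
      rw [this]; exact dvd_sub (q1E.mul_right _) hWq1)
  obtain ⟨ξ, hξ⟩ := exists_nth_neg_one q2 n (by
    refine (Dvd.dvd.trans ?_ hq2m)
    exact (Nat.mul_dvd_mul_left 2 hnm).trans (Nat.mul_dvd_mul_right (by norm_num) m))
  obtain ⟨β2, hβ2⟩ := hensel_lite q2 n hq2 ξ (W - E * R2) (by
      intro h; rw [(ZMod.intCast_zmod_eq_zero_iff_dvd _ q2).2 h, zero_pow hn0.ne'] at hξ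
      exact (neg_ne_zero.2 one_ne_zero) hξ.symm) (by
      intro h; have := Nat.le_of_dvd hn0 h; omega) (by
      have e : (q2 : ℤ) ∣ ξ ^ n + 1 := by
        rw [← ZMod.intCast_zmod_eq_zero_iff_dvd]; push_cast; rw [hξ]; ring
      have : ξ ^ n - (W - E * R2) = (ξ ^ n + 1) + E * R2 - (W + 1) := by ring
      rw [this]; exact dvd_sub (dvd_add e (q2E.mul_right _)) hWq2)
  -- coprimality
  have cWE : IsCoprime W E := ⟨W, -1, by rw [hEdef]; ring⟩
  have c12 : IsCoprime ((q1 : ℤ) ^ 2) ((q2 : ℤ) ^ 2) := by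
    apply IsCoprime.pow
    exact Nat.isCoprime_iff_coprime.2 ((Nat.coprime_primes hq1 hq2).2 hne)
  have c1E : IsCoprime ((q1 : ℤ) ^ 2) E' := ((Prime.coprime_iff_not_dvd p1).2 hE1).pow_left
  have c2E : IsCoprime ((q2 : ℤ) ^ 2) E' := ((Prime.coprime_iff_not_dvd p2).2 hE2).pow_left
  have cW1 : IsCoprime ((q1 : ℤ) ^ 2) W := (cWE.of_isCoprime_of_dvd_right q1E).symm.pow_left
  have cW2 : IsCoprime ((q2 : ℤ) ^ 2) W := (cWE.of_isCoprime_of_dvd_right q2E).symm.pow_left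
  have cWE' : IsCoprime E' W := (cWE.of_isCoprime_of_dvd_right E'E).symm
  have cQW : IsCoprime Q W := hQc.of_mul_right_left
  have cQE : IsCoprime Q E := hQc.of_mul_right_right
  have cQ1 : IsCoprime Q ((q1 : ℤ) ^ 2) := (cQE.of_isCoprime_of_dvd_right q1E).pow_right
  have cQ2 : IsCoprime Q ((q2 : ℤ) ^ 2) := (cQE.of_isCoprime_of_dvd_right q2E).pow_right
  have cQE' : IsCoprime Q E' := (cQE.of_isCoprime_of_dvd_right E'E)
  obtain ⟨z1, z11, z12⟩ := crt2 c12 β1 β2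
  obtain ⟨z2, z21, z22⟩ := crt2 (c1E.mul_left c2E) z1 r
  obtain ⟨z3, z31, z32⟩ := crt2 ((cW1.mul_left cW2).mul_left cWE') z2 1
  obtain ⟨b0, hz1, hz2⟩ := crt2 (((cQ1.mul_right cQ2).mul_right cQE').mul_right cQW).symm z3 0
  set M := (q1 : ℤ) ^ 2 * (q2 : ℤ) ^ 2 * E' * W * Q with hM
  have dW : W ∣ M := ⟨(q1 : ℤ) ^ 2 * (q2 : ℤ) ^ 2 * E' * Q, by rw [hM]; ring⟩
  have dE : E ∣ M := ⟨q1 * q2 * W * Q, by rw [hM, ← hE]; ring⟩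
  have dE' : E' ∣ M := E'E.trans dE
  have d1 : (q1 : ℤ) ^ 2 ∣ M := ⟨(q2 : ℤ) ^ 2 * E' * W * Q, by rw [hM]; ring⟩
  have d2 : (q2 : ℤ) ^ 2 ∣ M := ⟨(q1 : ℤ) ^ 2 * E' * W * Q, by rw [hM]; ring⟩
  have dQ : Q ∣ M := ⟨(q1 : ℤ) ^ 2 * (q2 : ℤ) ^ 2 * E' * W, by rw [hM]; ring⟩
  have comb : ∀ {k x y z : ℤ}, k ∣ x - y → k ∣ y - z → k ∣ x - z := by
    intro k x y z h1 h2; have := dvd_add h1 h2; simpa using this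
  have hbW : W ∣ b0 - 1 := comb ((dvd_mul_left _ _).trans hz1) z32
  have hz1' : (q1 : ℤ) ^ 2 * (q2 : ℤ) ^ 2 * E' ∣ b0 - z2 := comb ((dvd_mul_right _ _).trans hz1) z31
  have hbE' : E' ∣ b0 - r := comb ((dvd_mul_left _ _).trans hz1') z22
  have hz2' : (q1 : ℤ) ^ 2 * (q2 : ℤ) ^ 2 ∣ b0 - z1 := comb ((dvd_mul_right _ _).trans hz1') z21
  have hb01 : (q1 : ℤ) ^ 2 ∣ b0 ^ n - (W - E * R1) :=
    comb ((comb ((dvd_mul_right _ _).trans hz2') z11).trans (sub_dvd_pow_sub_pow _ _ n)) hβ1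
  have hb02 : (q2 : ℤ) ^ 2 ∣ b0 ^ n - (W - E * R2) :=
    comb ((comb ((dvd_mul_left _ _).trans hz2') z12).trans (sub_dvd_pow_sub_pow _ _ n)) hβ2
  have hb0Q : Q ∣ b0 := by simpa using hz2
  have hb0E' : E' ∣ W * b0 ^ n - 1 := by
    have : W * b0 ^ n - 1 = W * (b0 ^ n - r ^ n) + (W * r ^ n - 1) := by ring
    rw [this]; exact dvd_add ((hbE'.trans (sub_dvd_pow_sub_pow _ _ n)).mul_left _) hr
  have hb0E : E ∣ W * b0 ^ n - 1 := by
    rw [← hE]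
    have c12' : IsCoprime (q1 : ℤ) (q2 : ℤ) :=
      Nat.isCoprime_iff_coprime.2 ((Nat.coprime_primes hq1 hq2).2 hne)
    refine IsCoprime.mul_dvd (IsCoprime.mul_left ((Prime.coprime_iff_not_dvd p1).2 hE1)
      ((Prime.coprime_iff_not_dvd p2).2 hE2)) (IsCoprime.mul_dvd c12' ?_ ?_) hb0E'
    · have : W * b0 ^ n - 1 = W * (b0 ^ n - (W - E * R1)) + E * (1 - W * R1) := by rw [hEdef]; ring
      rw [this]
      exact dvd_add (((dvd_pow_self _ two_ne_zero).trans hb01).mul_left _) (q1E.mul_right _)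
    · have : W * b0 ^ n - 1 = W * (b0 ^ n - (W - E * R2)) + E * (1 - W * R2) := by rw [hEdef]; ring
      rw [this]
      exact dvd_add (((dvd_pow_self _ two_ne_zero).trans hb02).mul_left _) (q2E.mul_right _)
  have hE'pos : 0 < E' := by
    have h1 : (0 : ℤ) < q1 * q2 := by
      have := hq1.pos; have := hq2.pos; positivity
    by_contra hcon
    push Not at hcon
    nlinarith
  have hMpos : 0 < M := by
    have := hq1.pos; have := hq2.pos; rw [hM]; positivity
  refine ⟨M, b0, hMpos, dW, dE, hbW, ?_⟩
  intro a b ha hb hab hlt1 hlt2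
  have ean : M ∣ a ^ n - 1 := ha.trans (by simpa using sub_dvd_pow_sub_pow a 1 n)
  have ebn : M ∣ b ^ n - b0 ^ n := hb.trans (sub_dvd_pow_sub_pow b b0 n)
  have dS : E ∣ W * b ^ n - a ^ n := by
    have : W * b ^ n - a ^ n = W * (b ^ n - b0 ^ n) + (W * b0 ^ n - 1) - (a ^ n - 1) := by ring
    rw [this]
    exact dvd_sub (dvd_add ((dE.trans ebn).mul_left _) hb0E) (dE.trans ean)
  have dR : E ∣ W * a ^ n - b ^ n := by
    have : W * a ^ n - b ^ n = E * b ^ n - W * (W * b ^ n - a ^ n) := by rw [hEdef]; ring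
    rw [this]; exact dvd_sub (dvd_mul_right _ _) (dS.mul_left _)
  obtain ⟨S, hS⟩ := dS
  obtain ⟨R, hR⟩ := dR
  have hRpos : 0 < R := by
    have : 0 < E * R := by rw [← hR]; linarith
    exact pos_of_mul_pos_right this hEpos.le
  have hSpos : 0 < S := by
    have : 0 < E * S := by rw [← hS]; linarith
    exact pos_of_mul_pos_right this hEpos.le
  have h1 : W * R + S = a ^ n := by
    apply mul_left_cancel₀ hEpos.ne'
    have : E * (W * R + S) = W * (E * R) + E * S := by ring
    rw [this, ← hR, ← hS, hEdef]; ring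
  have h2 : R + W * S = b ^ n := by
    apply mul_left_cancel₀ hEpos.ne'
    have : E * (R + W * S) = E * R + W * (E * S) := by ring
    rw [this, ← hR, ← hS, hEdef]; ring
  refine ⟨R, S, hRpos, hSpos, h1, h2, ?_⟩
  intro d y hdy hd K _ _ ⟨x, hx⟩ hK
  have caW : IsCoprime a W := by
    obtain ⟨k, hk⟩ := dW.trans ha
    exact ⟨1, -k, by linear_combination hk⟩
  have cbW : IsCoprime b W := by
    obtain ⟨k, hk⟩ := dW.trans hb
    obtain ⟨l, hl⟩ := hbW
    exact ⟨1, -(k + l), by linear_combination hk + hl⟩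
  have caS : IsCoprime a S := by
    have h3 : IsCoprime a (W * b ^ n) := caW.mul_right hab.pow_right
    have h4 : E * S = W * b ^ n + a * (-a ^ (n - 1)) := by
      have : a * a ^ (n - 1) = a ^ n := by rw [← pow_succ', Nat.sub_add_cancel hn0]
      rw [← hS, ← this]; ring
    have h5 : IsCoprime a (E * S) := by rw [h4]; exact h3.add_mul_left_right _
    exact h5.of_mul_right_right
  have cbR : IsCoprime b R := by
    have h3 : IsCoprime b (W * a ^ n) := cbW.mul_right hab.symm.pow_right
    have h4 : E * R = W * a ^ n + b * (-b ^ (n - 1)) := by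
      have : b * b ^ (n - 1) = b ^ n := by rw [← pow_succ', Nat.sub_add_cancel hn0]
      rw [← hR, ← this]; ring
    have h5 : IsCoprime b (E * R) := by rw [h4]; exact h3.add_mul_left_right _
    exact h5.of_mul_right_right
  have ca2 : IsCoprime a 2 := caW.of_isCoprime_of_dvd_right hW2
  have cb2 : IsCoprime b 2 := cbW.of_isCoprime_of_dvd_right hW2
  let z : 𝓞 K := ⟨x, qf_x_int hx⟩
  have hz : algebraMap (𝓞 K) K z = x := rfl
  have hθ : ((y : 𝓞 K) * z) * ((y : 𝓞 K) * z) = ((-(W * R * S) : ℤ) : 𝓞 K) := by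
    apply RingOfIntegers.ext
    rw [hdy]
    simp only [map_mul, map_intCast, hz]
    push_cast
    rw [← hx]; ring
  have hneg : -(W * R * S) < 0 := by
    have : 0 < W * R * S := by positivity
    linarith
  refine master hθ hneg hK m n hm hmn W R S a b h1 h2 rfl (ca2.mul_right caS) (cb2.mul_right cbR) ?_ ?_ ?_
  · refine ⟨q1, ⟨hq1⟩, hq1m, ?_⟩
    have := local_R q1 hq1 n W E (q2 * E') R R1 S a b b0 (by rw [← hE]; ring) (by
      intro h
      rcases p1.dvd_or_dvd h with h | h
      · exact hne ((Nat.prime_dvd_prime_iff_eq hq1 hq2).1 (by exact_mod_cast h))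
      · exact hE1 h) (d1.trans ha) (d1.trans hb) hb01 hR.symm h1
    refine hR1 W R S ?_ this.1 this.2
    have h := (ZMod.intCast_zmod_eq_zero_iff_dvd _ q1).2 hWq1
    push_cast at h
    exact sub_eq_zero.1 h
  · refine ⟨q2, ⟨hq2⟩, hq2m, ?_⟩
    have := local_R q2 hq2 n W E (q1 * E') R R2 S a b b0 (by rw [← hE]; ring) (by
      intro h
      rcases p2.dvd_or_dvd h with h | h
      · exact hne ((Nat.prime_dvd_prime_iff_eq hq2 hq1).1 (by exact_mod_cast h)).symm
      · exact hE2 h) (d2.trans ha) (d2.trans hb) hb02 hR.symm h1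
    refine hR2 W R S ?_ this.1 this.2
    have h := (ZMod.intCast_zmod_eq_zero_iff_dvd _ q2).2 hWq2
    push_cast at h
    exact eq_neg_of_add_eq_zero_left h
  · intro h2m
    obtain ⟨q3, hq3, rfl, hq3m, hsq⟩ := hQ h2m
    refine ⟨q3, hq3, hq3m, ?_⟩
    have hb3 := big q3 hq3.out hq3m
    have ha1 : (a : ZMod q3) = 1 := by
      have h := (ZMod.intCast_zmod_eq_zero_iff_dvd _ q3).2 (dQ.trans ha)
      push_cast at h
      exact sub_eq_zero.1 h
    have hb1 : (b : ZMod q3) = 0 := by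
      have h := (ZMod.intCast_zmod_eq_zero_iff_dvd _ q3).2 (comb (z := 0) (dQ.trans hb) (by simpa using hb0Q))
      push_cast at h
      simpa using h
    refine row3_R q3 (by omega) W R S hsq ?_ ?_ ?_
    · apply ZMod.exists_sq_eq_neg_one_iff.2
      have h4 : 4 ∣ q3 - 1 := Dvd.dvd.trans (Dvd.dvd.mul_right (by norm_num) m) hq3m
      have := hq3.out.two_le
      omega
    · have := congrArg (Int.cast (R := ZMod q3)) h1
      push_cast at this
      rw [this, ha1, one_pow]
    · have := congrArg (Int.cast (R := ZMod q3)) h2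
      push_cast at this
      rw [this, hb1, zero_pow hn0.ne']

theorem split_E (W : ℤ) (q1 q2 : ℕ) (hq1 : q1.Prime) (hq2 : q2.Prime) (h1 : 2 < q1) (h2 : 2 < q2)
    (a1 : (q1 : ℤ) ∣ W - 1) (b1 : ¬ (q1 : ℤ) ^ 2 ∣ W - 1) (a2 : (q2 : ℤ) ∣ W + 1)
    (b2 : ¬ (q2 : ℤ) ^ 2 ∣ W + 1) :
    q1 ≠ q2 ∧ ∃ E' : ℤ, (q1 : ℤ) * q2 * E' = W ^ 2 - 1 ∧ ¬ (q1 : ℤ) ∣ E' ∧ ¬ (q2 : ℤ) ∣ E' := by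
  have p1 : Prime (q1 : ℤ) := Nat.prime_iff_prime_int.1 hq1
  have p2 : Prime (q2 : ℤ) := Nat.prime_iff_prime_int.1 hq2
  have no : ∀ q : ℕ, 2 < q → (q : ℤ) ∣ W - 1 → (q : ℤ) ∣ W + 1 → False := by
    intro q hq h h'
    have := dvd_sub h' h
    have h3 : (q : ℤ) ∣ 2 := by
      have e : W + 1 - (W - 1) = 2 := by ring
      rwa [e] at this
    have := Int.le_of_dvd (by norm_num) h3
    omega
  refine ⟨?_, ?_⟩
  · rintro rfl; exact no q1 h1 a1 a2
  obtain ⟨u, hu⟩ := a1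
  obtain ⟨v, hv⟩ := a2
  refine ⟨u * v, ?_, ?_, ?_⟩
  · have : W ^ 2 - 1 = (W - 1) * (W + 1) := by ring
    rw [this, hu, hv]; ring
  · intro h
    rcases p1.dvd_or_dvd h with h | h
    · apply b1; rw [hu, pow_two]; exact mul_dvd_mul_left _ h
    · apply no q1 h1 ⟨u, hu⟩; rw [hv]; exact h.mul_left _
  · intro h
    rcases p2.dvd_or_dvd h with h | h
    · refine no q2 h2 ?_ ⟨v, hv⟩; rw [hu]; exact h.mul_left _
    · apply b2; rw [hv, pow_two]; exact mul_dvd_mul_left _ h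

theorem big_prime (m B : ℕ) (hm : 0 < m) : ∃ q : ℕ, q.Prime ∧ B < q ∧ 12 * m ∣ q - 1 := by
  obtain ⟨q, hq, hB, hmod⟩ := Nat.exists_prime_gt_modEq_one (k := 12 * m) B (by omega)
  refine ⟨q, hq, hB, ?_⟩
  exact (Nat.modEq_iff_dvd' hq.one_lt.le).1 hmod.symm

theorem setup_odd (m : ℕ) (hm : 1 < m) (hodd : Odd m) : ∃ c M b0 : ℤ, 2 ≤ c ∧ 0 < M ∧ c ∣ M ∧
    (c ^ 2 - 1) ∣ M ∧ c ∣ b0 - 1 ∧ Good m m (c ^ m) M b0 := by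
  obtain ⟨q1, hq1, hB1, hq1m⟩ := big_prime m (12 * m) (by omega)
  obtain ⟨q2, hq2, hB2, hq2m⟩ := big_prime m q1 (by omega)
  have p1 : Prime (q1 : ℤ) := Nat.prime_iff_prime_int.1 hq1
  have p2 : Prime (q2 : ℤ) := Nat.prime_iff_prime_int.1 hq2
  have c12 : IsCoprime ((q1 : ℤ) ^ 2) ((q2 : ℤ) ^ 2) := by
    apply IsCoprime.pow
    exact Nat.isCoprime_iff_coprime.2 ((Nat.coprime_primes hq1 hq2).2 (by omega))
  have c1 : IsCoprime ((q1 : ℤ) ^ 2) 2 := by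
    apply IsCoprime.pow_left
    exact_mod_cast Nat.isCoprime_iff_coprime.2 ((Nat.coprime_primes hq1 Nat.prime_two).2 (by omega))
  have c2 : IsCoprime ((q2 : ℤ) ^ 2) 2 := by
    apply IsCoprime.pow_left
    exact_mod_cast Nat.isCoprime_iff_coprime.2 ((Nat.coprime_primes hq2 Nat.prime_two).2 (by omega))
  obtain ⟨z, hz1, hz2⟩ := crt2 c12 (1 + q1) (-1 + q2)
  obtain ⟨w, hw1, hw2⟩ := crt2 (c1.mul_left c2) z 0
  set T : ℤ := (q1 : ℤ) ^ 2 * (q2 : ℤ) ^ 2 * 2 with hT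
  have hTpos : 2 ≤ T := by
    have : (1 : ℤ) ≤ (q1 : ℤ) ^ 2 * (q2 : ℤ) ^ 2 := by
      have := hq1.pos; have := hq2.pos
      have : (0 : ℤ) < (q1 : ℤ) ^ 2 * (q2 : ℤ) ^ 2 := by positivity
      linarith
    linarith
  set c : ℤ := w + T * (|w| + 1) with hc
  have hc2 : 2 ≤ c := by
    have := neg_abs_le w
    have := abs_nonneg w
    nlinarith
  have dT : ∀ {k x : ℤ}, k ∣ T → k ∣ w - x → k ∣ c - x := by
    intro k x h1 h2
    have : c - x = (w - x) + T * (|w| + 1) := by rw [hc]; ring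
    rw [this]; exact dvd_add h2 (h1.mul_right _)
  have h2c : 2 ∣ c := by simpa using dT (x := 0) (dvd_mul_left _ _) hw2
  have h1c : (q1 : ℤ) ^ 2 ∣ c - (1 + q1) := by
    apply dT ⟨(q2 : ℤ) ^ 2 * 2, by rw [hT]; ring⟩
    have := dvd_add ((dvd_mul_right _ _).trans hw1) hz1
    simpa using this
  have h2c' : (q2 : ℤ) ^ 2 ∣ c - (-1 + q2) := by
    apply dT ⟨(q1 : ℤ) ^ 2 * 2, by rw [hT]; ring⟩
    have := dvd_add ((dvd_mul_left _ _).trans hw1) hz2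
    simpa using this
  have ex1 : (q1 : ℤ) ^ 2 ∣ c ^ m - (1 + m * q1) := by
    obtain ⟨k, hk⟩ := Polynomial.powAddExpansion (1 : ℤ) (q1 : ℤ) m
    have e : c ^ m - (1 + m * q1) = (c ^ m - (1 + q1) ^ m) + k * q1 ^ 2 := by rw [hk]; simp; ring
    rw [e]; exact dvd_add (h1c.trans (sub_dvd_pow_sub_pow _ _ m)) (dvd_mul_left _ _)
  have ex2 : (q2 : ℤ) ^ 2 ∣ c ^ m - (-1 + m * q2) := by
    obtain ⟨k, hk⟩ := Polynomial.powAddExpansion (-1 : ℤ) (q2 : ℤ) m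
    have hev : Even (m - 1) := by
      obtain ⟨t, ht⟩ := hodd; exact ⟨t, by omega⟩
    have e : c ^ m - (-1 + m * q2) = (c ^ m - (-1 + q2) ^ m) + k * q2 ^ 2 := by
      rw [hk, hodd.neg_one_pow, hev.neg_one_pow]; ring
    rw [e]; exact dvd_add (h2c'.trans (sub_dvd_pow_sub_pow _ _ m)) (dvd_mul_left _ _)
  have nd : ∀ q : ℕ, q.Prime → 12 * m < q → ¬ (q : ℤ) ^ 2 ∣ m * q := by
    intro q hq hB h
    rw [pow_two] at h
    have := (mul_dvd_mul_iff_right (by exact_mod_cast hq.ne_zero)).1 h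
    have h' : q ∣ m := by exact_mod_cast this
    have := Nat.le_of_dvd (by omega) h'
    omega
  set W : ℤ := c ^ m with hW
  have a1 : (q1 : ℤ) ∣ W - 1 := by
    have := dvd_add ((dvd_pow_self _ two_ne_zero).trans ex1) (dvd_mul_left (q1 : ℤ) m)
    have e : W - (1 + m * q1) + m * q1 = W - 1 := by ring
    rwa [e] at this
  have a2 : (q2 : ℤ) ∣ W + 1 := by
    have := dvd_add ((dvd_pow_self _ two_ne_zero).trans ex2) (dvd_mul_left (q2 : ℤ) m)
    have e : W - (-1 + m * q2) + m * q2 = W + 1 := by ring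
    rwa [e] at this
  have b1 : ¬ (q1 : ℤ) ^ 2 ∣ W - 1 := by
    intro h
    apply nd q1 hq1 hB1
    have := dvd_sub h ex1
    have e : W - 1 - (W - (1 + m * q1)) = m * q1 := by ring
    rwa [e] at this
  have b2 : ¬ (q2 : ℤ) ^ 2 ∣ W + 1 := by
    intro h
    apply nd q2 hq2 (by omega)
    have := dvd_sub h ex2
    have e : W + 1 - (W - (-1 + m * q2)) = m * q2 := by ring
    rwa [e] at this
  obtain ⟨hne, E', hE, hE1, hE2⟩ := split_E W q1 q2 hq1 hq2 (by omega) (by omega) a1 b1 a2 b2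
  have hcW : c ∣ W := dvd_pow_self _ (by omega)
  obtain ⟨M, b0, hM, hWM, hEM, hb0, hG⟩ := setup_exists m m hm dvd_rfl (dvd_mul_left _ _) W E' 1 (c ^ (2 * m - 1)) q1 q2
    (h2c.trans hcW) (hc2.trans (by
      have := le_self_pow₀ (by linarith : (1 : ℤ) ≤ c) (by omega : m ≠ 0); exact this)) hq1 hq2 hq1m hq2m hE hne hE1 hE2 a1 a2 (by
      have e : W * (c ^ (2 * m - 1)) ^ m = (W ^ 2) ^ m := by
        rw [hW, ← mul_pow, ← pow_succ', show 2 * m - 1 + 1 = m * 2 by omega, pow_mul c m 2]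
      rw [e]
      have : E' ∣ W ^ 2 - 1 := ⟨q1 * q2, by rw [← hE]; ring⟩
      exact this.trans (by simpa using sub_dvd_pow_sub_pow (W ^ 2) 1 m)) one_pos isCoprime_one_left
    (by intro h; obtain ⟨t, ht⟩ := hodd; omega)
  refine ⟨c, M, b0, hc2, hM, hcW.trans hWM, ?_, hcW.trans hb0, hG⟩
  refine Dvd.dvd.trans ?_ hEM
  have e : W ^ 2 = (c ^ 2) ^ m := by rw [hW, ← pow_mul, ← pow_mul, mul_comm]
  rw [e]; simpa using sub_dvd_pow_sub_pow (c ^ 2) 1 m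

theorem setup_even (m n : ℕ) (hn : 0 < n) (hmn : m = 2 * n) : ∃ (W M b0 : ℤ) (q4 : ℕ), q4.Prime ∧
    (q4 : ℤ) ∣ W ∧ ¬ (q4 : ℤ) ^ 2 ∣ W ∧ 2 ^ n < W ∧ 0 < M ∧ W ∣ M ∧ (W ^ 2 - 1) ∣ M ∧ W ∣ b0 - 1 ∧ Good m n W M b0 := by
  have hm : 1 < m := by omega
  obtain ⟨q1, hq1, hB1, hq1m⟩ := big_prime m (12 * m) (by omega)
  obtain ⟨q3, hq3, hB3, hq3m⟩ := big_prime m q1 (by omega)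
  obtain ⟨q4, hq4, hB4, hq4m⟩ := big_prime m q3 (by omega)
  have : Fact q3.Prime := ⟨hq3⟩
  have p1 : Prime (q1 : ℤ) := Nat.prime_iff_prime_int.1 hq1
  have p3 : Prime (q3 : ℤ) := Nat.prime_iff_prime_int.1 hq3
  have p4 : Prime (q4 : ℤ) := Nat.prime_iff_prime_int.1 hq4
  obtain ⟨g, hg⟩ : ∃ g : ZMod q3, ¬ IsSquare g := FiniteField.exists_nonsquare (by
    rw [ZMod.ringChar_zmod_n]; omega)
  obtain ⟨g3, rfl⟩ := ZMod.intCast_surjective g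
  have hm1 : IsSquare (-1 : ZMod q3) := by
    apply ZMod.exists_sq_eq_neg_one_iff.2
    have h4 : 4 ∣ q3 - 1 := Dvd.dvd.trans (Dvd.dvd.mul_right (by norm_num) m) hq3m
    have := hq3.two_le
    omega
  have cp : ∀ {x y : ℕ}, x.Prime → y.Prime → x ≠ y → IsCoprime (x : ℤ) (y : ℤ) := by
    intro x y hx hy hxy
    exact Nat.isCoprime_iff_coprime.2 ((Nat.coprime_primes hx hy).2 hxy)
  have c12m : ∀ q : ℕ, q.Prime → 12 * m < q → IsCoprime (q : ℤ) ((12 * m : ℕ) : ℤ) := by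
    intro q hq h
    apply Nat.isCoprime_iff_coprime.2
    rw [hq.coprime_iff_not_dvd]
    intro h'
    have := Nat.le_of_dvd (by omega) h'
    omega
  obtain ⟨z1, hz11, hz12⟩ := crt2 ((cp hq1 hq4 (by omega)).pow (m := 2) (n := 2)) (2 + q1) (1 + q4)
  obtain ⟨z2, hz21, hz22⟩ := crt2 (((cp hq1 hq3 (by omega)).pow_left (m := 2)).mul_left ((cp hq4 hq3 (by omega)).pow_left (m := 2))) z1 (1 + g3)
  obtain ⟨z, hz1, hz2⟩ := crt2 ((((c12m q1 hq1 hB1).pow_left (m := 2)).mul_left ((c12m q4 hq4 (by omega)).pow_left (m := 2))).mul_left (c12m q3 hq3 (by omega))) z2 1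
  have comb : ∀ {k x y z : ℤ}, k ∣ x - y → k ∣ y - z → k ∣ x - z := by
    intro k x y z h1 h2; have := dvd_add h1 h2; simpa using this
  have w3 : (q3 : ℤ) ∣ z - (1 + g3) := comb ((dvd_mul_left _ _).trans hz1) hz22
  have w14 := comb ((dvd_mul_right _ _).trans hz1) hz21
  have w1 : (q1 : ℤ) ^ 2 ∣ z - (2 + q1) := comb ((dvd_mul_right _ _).trans w14) hz11
  have w4 : (q4 : ℤ) ^ 2 ∣ z - (1 + q4) := comb ((dvd_mul_left _ _).trans w14) hz12
  have cz1 : IsCoprime ((q1 : ℤ) ^ 2) z := by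
    apply IsCoprime.pow_left
    rw [Prime.coprime_iff_not_dvd p1]
    intro h
    have h5 := dvd_sub h ((dvd_pow_self _ two_ne_zero).trans w1)
    have h6 : (q1 : ℤ) ∣ 2 := by
      have := dvd_sub h5 (dvd_refl (q1 : ℤ))
      ring_nf at this; exact this
    have := Int.le_of_dvd (by norm_num) h6
    omega
  have cz4 : IsCoprime ((q4 : ℤ) ^ 2) z := by
    apply IsCoprime.pow_left
    rw [Prime.coprime_iff_not_dvd p4]
    intro h
    have h5 := dvd_sub h ((dvd_pow_self _ two_ne_zero).trans w4)
    have h6 : (q4 : ℤ) ∣ 1 := by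
      have := dvd_sub h5 (dvd_refl (q4 : ℤ))
      ring_nf at this; exact this
    have := Int.le_of_dvd (by norm_num) h6
    omega
  have zm : ∀ {x y : ℤ}, (q3 : ℤ) ∣ x - y → (x : ZMod q3) = y := by
    intro x y h
    have h := (ZMod.intCast_zmod_eq_zero_iff_dvd _ q3).2 h
    push_cast at h
    exact sub_eq_zero.1 h
  have cz3 : IsCoprime (q3 : ℤ) z := by
    rw [Prime.coprime_iff_not_dvd p3]
    intro h
    have h7 := zm w3
    rw [(ZMod.intCast_zmod_eq_zero_iff_dvd _ q3).2 h] at h7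
    push_cast at h7
    apply hg
    have : (g3 : ZMod q3) = -1 := by linear_combination -h7
    rw [this]; exact hm1
  have czm : IsCoprime ((12 * m : ℕ) : ℤ) z := by
    obtain ⟨k, hk⟩ := hz2
    exact ⟨-k, 1, by linear_combination hk⟩
  have cz := ((cz1.mul_left cz4).mul_left cz3).mul_left czm
  obtain ⟨q2, hq2b, hq2, hq2z⟩ := Nat.forall_exists_prime_gt_and_zmodEq (2 ^ n + q4) (q := q1 ^ 2 * q4 ^ 2 * q3 * (12 * m)) (a := z) (by
    have := hq1.pos; have := hq3.pos; have := hq4.pos; positivity) (by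
    have := cz.symm; push_cast at this ⊢; exact this)
  have hdz : (q1 : ℤ) ^ 2 * (q4 : ℤ) ^ 2 * q3 * ((12 * m : ℕ) : ℤ) ∣ (q2 : ℤ) - z := by
    have := hq2z.symm.dvd
    push_cast at this ⊢; exact this
  have v12 : ((12 * m : ℕ) : ℤ) ∣ (q2 : ℤ) - 1 := comb ((dvd_mul_left _ _).trans hdz) hz2
  have hdz' := (dvd_mul_right _ _).trans hdz
  have v3 : (q3 : ℤ) ∣ (q2 : ℤ) - (1 + g3) := comb ((dvd_mul_left _ _).trans hdz') w3
  have hdz'' := (dvd_mul_right _ _).trans hdz'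
  have v1 : (q1 : ℤ) ^ 2 ∣ (q2 : ℤ) - (2 + q1) := comb ((dvd_mul_right _ _).trans hdz'') w1
  have v4 : (q4 : ℤ) ^ 2 ∣ (q2 : ℤ) - (1 + q4) := comb ((dvd_mul_left _ _).trans hdz'') w4
  have hq2m : 12 * m ∣ q2 - 1 := by
    have e : ((q2 - 1 : ℕ) : ℤ) = (q2 : ℤ) - 1 := by
      rw [Nat.cast_sub hq2.one_lt.le]; simp
    rw [← e] at v12
    exact_mod_cast v12
  set W : ℤ := (q2 : ℤ) - 1 with hW
  have nsq : ∀ q : ℕ, q.Prime → ¬ (q : ℤ) ^ 2 ∣ q := by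
    intro q hq h
    have h' : q ^ 2 ∣ q := by exact_mod_cast h
    have := Nat.le_of_dvd hq.pos h'
    have := hq.two_le
    nlinarith
  have a1 : (q1 : ℤ) ∣ W - 1 := by
    have := dvd_add ((dvd_pow_self _ two_ne_zero).trans v1) (dvd_refl (q1 : ℤ))
    have e : (q2 : ℤ) - (2 + q1) + q1 = W - 1 := by rw [hW]; ring
    rwa [e] at this
  have b1 : ¬ (q1 : ℤ) ^ 2 ∣ W - 1 := by
    intro h
    apply nsq q1 hq1
    have := dvd_sub h v1
    have e : W - 1 - ((q2 : ℤ) - (2 + q1)) = q1 := by rw [hW]; ring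
    rwa [e] at this
  have a4 : (q4 : ℤ) ∣ W := by
    have := dvd_add ((dvd_pow_self _ two_ne_zero).trans v4) (dvd_refl (q4 : ℤ))
    have e : (q2 : ℤ) - (1 + q4) + q4 = W := by rw [hW]; ring
    rwa [e] at this
  have b4 : ¬ (q4 : ℤ) ^ 2 ∣ W := by
    intro h
    apply nsq q4 hq4
    have := dvd_sub h v4
    have e : W - ((q2 : ℤ) - (1 + q4)) = q4 := by rw [hW]; ring
    rwa [e] at this
  have eW : W + 1 = q2 := by rw [hW]; ring
  obtain ⟨hne, E', hE, hE1, hE2⟩ := split_E W q1 q2 hq1 hq2 (by omega) (by have := Nat.two_pow_pos n; omega) a1 b1 (by rw [eW])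
    (by rw [eW]; exact nsq q2 hq2)
  have hWz : (W : ZMod q3) = g3 := by
    have : (q3 : ℤ) ∣ W - g3 := by
      have e : W - g3 = q2 - (1 + g3) := by rw [hW]; ring
      rw [e]; exact v3
    exact zm this
  have hWns : ¬ IsSquare (W : ZMod q3) := by rw [hWz]; exact hg
  have hWbig : 2 ^ n < W := by
    have : (2 ^ n + q4 : ℤ) < q2 := by exact_mod_cast hq2b
    have h4 : (1 : ℤ) ≤ q4 := by exact_mod_cast hq4.pos
    rw [hW]; linarith
  have h2n : (2 : ℤ) ≤ 2 ^ n := le_self_pow₀ (by norm_num) hn.ne'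
  obtain ⟨M, b0, hM, hWM, hEM, hb0, hG⟩ := setup_exists m n hm ⟨2, by omega⟩ ⟨1, by omega⟩ W E' q3 1 q1 q2
    (by
      refine Dvd.dvd.trans ?_ v12
      push_cast; exact Dvd.dvd.mul_right (by norm_num) _) (by linarith) hq1 hq2 hq1m hq2m hE hne hE1 hE2 a1 (by rw [eW])
    (by
      rw [one_pow, mul_one]
      refine ⟨q1, ?_⟩
      have hq20 : (q2 : ℤ) ≠ 0 := by exact_mod_cast hq2.ne_zero
      apply mul_left_cancel₀ hq20
      rw [← eW] at hE ⊢
      linear_combination -hE) (by exact_mod_cast hq3.pos)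
    (by
      rw [Prime.coprime_iff_not_dvd p3]
      intro h
      apply hWns
      have h8 := (ZMod.intCast_zmod_eq_zero_iff_dvd _ q3).2 h
      push_cast at h8
      have h9 : (W : ZMod q3) * (((W : ZMod q3) - 1) * ((W : ZMod q3) + 1)) = 0 := by linear_combination h8
      rcases mul_eq_zero.1 h9 with h | h
      · rw [h]; exact ⟨0, by simp⟩
      rcases mul_eq_zero.1 h with h | h
      · rw [sub_eq_zero.1 h]; exact ⟨1, by simp⟩
      · rw [eq_neg_of_add_eq_zero_left h]; exact hm1)
    (by intro _; exact ⟨q3, ⟨hq3⟩, rfl, hq3m, hWns⟩)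
  exact ⟨W, M, b0, q4, hq4, a4, b4, hWbig, hM, hWM, hEM, hb0, hG⟩

theorem good_finite (m : ℕ) (X : ℝ) : {d : ℤ | GoodRankMsq m X d}.Finite := by
  obtain ⟨B, hB⟩ := exists_nat_gt (4 * X)
  apply (Set.finite_Icc (-(B : ℤ)) B).subset
  rintro d ⟨hd, hs, h⟩
  obtain ⟨K, _, _, hx, hK⟩ := exists_qf d hd
  have h1 := (h K hx hK).1
  obtain ⟨x, hx⟩ := hx
  have h2 := qf_discr_ge hx hd hs hK
  have h3 : ((|d| : ℤ) : ℝ) ≤ 4 * (|discr K| : ℝ) := by exact_mod_cast h2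
  have h4 : ((|d| : ℤ) : ℝ) ≤ B := by linarith
  have h5 : |d| ≤ (B : ℤ) := by exact_mod_cast h4
  exact abs_le.1 h5

theorem sqfree_part (N : ℤ) (hN : 0 < N) : ∃ e y : ℤ, 0 < e ∧ Squarefree e ∧ N = e * (y * y) ∧ e ≤ N := by
  obtain ⟨a, b, h, hs⟩ := Nat.sq_mul_squarefree N.toNat
  have hN' : ((N.toNat : ℕ) : ℤ) = N := Int.toNat_of_nonneg hN.le
  have hpos : 0 < N.toNat := by omega
  have ha : 0 < a := Nat.pos_of_ne_zero hs.ne_zero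
  refine ⟨a, b, by exact_mod_cast ha, ?_, ?_, ?_⟩
  · rw [Int.squarefree_natCast]; exact hs
  · rw [← hN', ← h]; push_cast; ring
  · rw [← hN']
    have : a ∣ N.toNat := ⟨b ^ 2, by rw [← h]; ring⟩
    exact_mod_cast Nat.le_of_dvd hpos this

theorem exact_dvd {p N e y : ℤ} (hp : Prime p) (h1 : p ∣ N) (h2 : ¬ p ^ 2 ∣ N) (h : N = e * (y * y)) : p ∣ e := by
  rw [h] at h1
  rcases hp.dvd_or_dvd h1 with h3 | h3
  · exact h3
  · exfalso; apply h2
    have : p ∣ y := by rcases hp.dvd_or_dvd h3 with h | h <;> exact h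
    rw [h, pow_two]
    exact (mul_dvd_mul this this).mul_left _

theorem good_of (m : ℕ) (X : ℝ) (N e y : ℤ) (he : 0 < e) (hs : Squarefree e) (hN : N = e * (y * y))
    (hX : (4 * e : ℝ) ≤ X)
    (h : ∀ d y : ℤ, -N = d * (y * y) → d < 0 →
      ∀ (K : Type) [Field K] [NumberField K], (∃ x : K, x * x = (d : K)) → Module.finrank ℚ K = 2 →
        ∃ f : Multiplicative (ZMod m × ZMod m) →* ClassGroup (𝓞 K), Function.Injective f) :
    GoodRankMsq m X (-e) := by
  refine ⟨by linarith, ?_, ?_⟩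
  · exact hs.squarefree_of_dvd (neg_dvd.2 dvd_rfl)
  intro K _ _ hx hK
  refine ⟨?_, h (-e) y (by rw [hN]; ring) (by linarith) K hx hK⟩
  obtain ⟨x, hx⟩ := hx
  have h1 := qf_discr_le hx (by linarith) hK
  rw [abs_neg, abs_of_pos he] at h1
  have : (|discr K| : ℝ) ≤ 4 * e := by exact_mod_cast h1
  linarith

theorem even_key (l x Y x' Y' e A : ℤ) (k : ℕ) (hl : Prime l) (hl2 : ¬ l ∣ 2) (hk : 0 < k) (hA : A = l ^ k)
    (hx : ¬ l ∣ x) (hx' : ¬ l ∣ x') (he : 2 ≤ e)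
    (h1 : x ^ 2 + e * Y ^ 2 = A ^ 2) (h2 : x' ^ 2 + e * Y' ^ 2 = A ^ 2) : x' = x ∨ x' = -x := by
  have hlA : l ∣ A := by rw [hA]; exact dvd_pow_self _ hk.ne'
  have hA0 : A ≠ 0 := by rw [hA]; exact pow_ne_zero _ hl.ne_zero
  have hPP : (x * Y' - x' * Y) * (x * Y' + x' * Y) = A ^ 2 * (Y' ^ 2 - Y ^ 2) := by
    linear_combination Y' ^ 2 * h1 - Y ^ 2 * h2
  have hY' : ¬ l ∣ Y' := by
    intro h
    apply hx'
    have : l ∣ x' ^ 2 := by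
      have e1 : x' ^ 2 = A * A - e * Y' * Y' := by linear_combination h2
      rw [e1]; exact dvd_sub (hlA.mul_right _) (h.mul_left _)
    exact hl.dvd_of_dvd_pow this
  have hnb : ¬ (l ∣ (x * Y' - x' * Y) ∧ l ∣ (x * Y' + x' * Y)) := by
    rintro ⟨ha, hb⟩
    have := dvd_add ha hb
    have e1 : x * Y' - x' * Y + (x * Y' + x' * Y) = 2 * (x * Y') := by ring
    rw [e1] at this
    rcases hl.dvd_or_dvd this with h | h
    · exact hl2 h
    · rcases hl.dvd_or_dvd h with h | h
      · exact hx h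
      · exact hY' h
  have hA2 : A ^ 2 = l ^ (k * 2) := by rw [hA, pow_mul]
  have hdvd : A ^ 2 ∣ (x * Y' - x' * Y) * (x * Y' + x' * Y) := ⟨_, hPP⟩
  have small : ∀ P Z : ℤ, A ^ 2 ∣ P → Z ^ 2 + e * P ^ 2 = A ^ 2 * A ^ 2 → P = 0 := by
    intro P Z hP hZ
    by_contra hne
    obtain ⟨t, rfl⟩ := hP
    have ht : t ≠ 0 := by rintro rfl; simp at hne
    have ht2 : 1 ≤ t ^ 2 := by have := sq_pos_of_ne_zero ht; omega
    have hA4 : 0 < A ^ 2 * A ^ 2 := by positivity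
    have : e * (A ^ 2 * t) ^ 2 = (A ^ 2 * A ^ 2) * (e * t ^ 2) := by ring
    rw [this] at hZ
    have h2e : 2 ≤ e * t ^ 2 := by nlinarith
    nlinarith [sq_nonneg Z]
  have hzero : (x * Y' - x' * Y) * (x * Y' + x' * Y) = 0 := by
    by_cases h : l ∣ (x * Y' - x' * Y)
    · have hn : ¬ l ∣ (x * Y' + x' * Y) := fun h' => hnb ⟨h, h'⟩
      rw [hA2] at hdvd
      have := hl.pow_dvd_of_dvd_mul_right _ hn hdvd
      rw [← hA2] at this
      rw [small _ (x * x' + e * Y * Y') this (by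
        linear_combination (x' ^ 2 + e * Y' ^ 2) * h1 + A ^ 2 * h2), zero_mul]
    · rw [hA2] at hdvd
      have := hl.pow_dvd_of_dvd_mul_left _ h hdvd
      rw [← hA2] at this
      rw [small _ (x * x' - e * Y * Y') this (by
        linear_combination (x' ^ 2 + e * Y' ^ 2) * h1 + A ^ 2 * h2), mul_zero]
  rw [hPP] at hzero
  have hYY : Y' ^ 2 - Y ^ 2 = 0 := (mul_eq_zero.1 hzero).resolve_left (pow_ne_zero _ hA0)
  have : (x' - x) * (x' + x) = 0 := by linear_combination h2 - h1 - e * hYY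
  rcases mul_eq_zero.1 this with h | h
  · left; linarith
  · right; linarith

set_option maxHeartbeats 2000000 in
theorem even_count (m n : ℕ) (hn : 0 < n) (hmn : m = 2 * n) : ∃ C L : ℕ, 0 < C ∧ 1 < L ∧ ∀ k : ℕ, 0 < k →
    ∀ X : ℝ, (C : ℝ) * ((L : ℝ) ^ k) ^ m ≤ X →
      L ^ k / C ≤ {d : ℤ | GoodRankMsq m X d}.ncard := by
  obtain ⟨W, M, b0, q4, hq4, hq4W, hq4W2, hW, hM, hWM, hEM, hb0, hG⟩ := setup_even m n hn hmn
  have hW2 : 2 < W := lt_of_le_of_lt (le_self_pow₀ (by norm_num) hn.ne') hW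
  obtain ⟨l, hl, hlbig, hlM⟩ := Nat.exists_prime_gt_modEq_one (k := M.toNat) (2 + M.toNat) (by omega)
  have hMn : ((M.toNat : ℕ) : ℤ) = M := Int.toNat_of_nonneg hM.le
  have hlM' : M ∣ (l : ℤ) - 1 := by
    have h := (Nat.modEq_iff_dvd.1 hlM.symm)
    rw [hMn] at h; exact_mod_cast h
  have pl : Prime (l : ℤ) := Nat.prime_iff_prime_int.1 hl
  have p4 : Prime (q4 : ℤ) := Nat.prime_iff_prime_int.1 hq4
  have hl2 : ¬ (l : ℤ) ∣ 2 := by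
    intro h; have := Int.le_of_dvd (by norm_num) h; omega
  have cMl : IsCoprime M (l : ℤ) := by
    obtain ⟨t, ht⟩ := hlM'
    exact ⟨-t, 1, by linear_combination ht⟩
  obtain ⟨s0, hs1, hs2⟩ := crt2 cMl (b0 - 1) 1
  set T : ℤ := M * l with hT
  have hTpos : 0 < T := by have := hl.pos; rw [hT]; positivity
  set s : ℤ := s0 % T with hs
  have hsnn : 0 ≤ s := Int.emod_nonneg _ hTpos.ne'
  have hslt : s < T := Int.emod_lt_of_pos _ hTpos
  have hTs : T ∣ s - s0 := by rw [hs]; exact (Int.mod_modEq s0 T).symm.dvd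
  have comb : ∀ {k x y z : ℤ}, k ∣ x - y → k ∣ y - z → k ∣ x - z := by
    intro k x y z h1 h2; have := dvd_add h1 h2; simpa using this
  have hsM : M ∣ s - (b0 - 1) := comb ((dvd_mul_right _ _).trans hTs) hs1
  have hsl : (l : ℤ) ∣ s - 1 := comb ((dvd_mul_left _ _).trans hTs) hs2
  have hWl : ¬ (l : ℤ) ∣ W := by
    intro h
    have h1 : (l : ℤ) ∣ M := h.trans hWM
    have := Int.le_of_dvd hM h1
    omega
  have h2n : (1 : ℤ) ≤ 2 ^ n := one_le_pow₀ (by norm_num)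
  refine ⟨(4 * 2 ^ n) * T.toNat, l, by have : 0 < T.toNat := by omega
                                       positivity, hl.one_lt, ?_⟩
  intro k hk X hX
  set a : ℤ := (l : ℤ) ^ k with ha
  have hapos : 0 < a := by have := hl.pos; rw [ha]; positivity
  have haM : M ∣ a - 1 := hlM'.trans (by rw [ha]; simpa using sub_dvd_pow_sub_pow (l : ℤ) 1 k)
  set J : ℕ := l ^ k / T.toNat with hJ
  have hTn : ((T.toNat : ℕ) : ℤ) = T := Int.toNat_of_nonneg hTpos.le
  have hJT : (J : ℤ) * T ≤ a := by
    have := Nat.div_mul_le_self (l ^ k) T.toNat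
    rw [ha, ← hTn, hJ]; exact_mod_cast this
  let b : ℕ → ℤ := fun j => a + s + T * j
  have hbprop : ∀ j < J, M ∣ b j - b0 ∧ (l : ℤ) ∣ b j - 1 ∧ a ≤ b j ∧ b j ≤ 2 * a := by
    intro j hj
    refine ⟨?_, ?_, ?_, ?_⟩
    · have e : b j - b0 = (a - 1) + (s - (b0 - 1)) + M * (l * j) := by simp only [b, hT]; ring
      rw [e]; exact dvd_add (dvd_add haM hsM) (dvd_mul_right _ _)
    · have e : b j - 1 = a + (s - 1) + l * (M * j) := by simp only [b, hT]; ring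
      rw [e]; exact dvd_add (dvd_add (by rw [ha]; exact dvd_pow_self _ hk.ne') hsl) (dvd_mul_right _ _)
    · have : 0 ≤ T * (j : ℤ) := by positivity
      simp only [b]; linarith
    · have : (j : ℤ) + 1 ≤ J := by exact_mod_cast hj
      simp only [b]; nlinarith
  have hex : ∀ j : ℕ, ∃ e : ℤ, j < J → (GoodRankMsq m X (-e) ∧ 2 ≤ e ∧ ∃ x Y : ℤ, ¬ (l : ℤ) ∣ x ∧
      x ^ 2 + e * Y ^ 2 = (a ^ n) ^ 2 ∧ (W ^ 2 - 1) * x = (W ^ 2 + 1) * a ^ n - 2 * W * (b j) ^ n) := by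
    intro j
    by_cases hj : j < J
    swap
    · exact ⟨0, fun h => absurd h hj⟩
    obtain ⟨hb1, hb2, hb3, hb4⟩ := hbprop j hj
    have hbl : ¬ (l : ℤ) ∣ b j := by
      intro h
      have := dvd_sub h hb2
      have e : b j - (b j - 1) = 1 := by ring
      rw [e] at this
      exact pl.not_isUnit (isUnit_of_dvd_one this)
    have hab : IsCoprime a (b j) := by
      rw [ha]; exact ((Prime.coprime_iff_not_dvd pl).2 hbl).pow_left
    have hanpos : 0 < a ^ n := by positivity
    have hab_n : a ^ n ≤ b j ^ n := pow_le_pow_left₀ hapos.le hb3 n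
    have hbn : b j ^ n ≤ 2 ^ n * a ^ n := by
      rw [← mul_pow]; exact pow_le_pow_left₀ (by linarith) hb4 n
    obtain ⟨R, S, hR, hS, e1, e2, hmain⟩ := hG a (b j) haM hb1 hab (by nlinarith) (by nlinarith)
    have hNpos : 0 < W * R * S := by positivity
    obtain ⟨e, y, he, hes, heN, hele⟩ := sqfree_part (W * R * S) hNpos
    refine ⟨e, fun _ => ⟨?_, ?_, W * R - S, 2 * y, ?_, ?_, ?_⟩⟩
    · apply good_of m X (W * R * S) e y he hes heN ?_ hmain
      refine le_trans ?_ hX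
      have b1 : W * R * S ≤ 2 ^ n * (a ^ n * a ^ n) := by
        have t1 : W * R ≤ a ^ n := by linarith
        have t2 : S ≤ b j ^ n := by nlinarith
        calc W * R * S ≤ a ^ n * (b j ^ n) := mul_le_mul t1 t2 hS.le hanpos.le
          _ ≤ a ^ n * (2 ^ n * a ^ n) := mul_le_mul_of_nonneg_left hbn hanpos.le
          _ = _ := by ring
      have b2 : 4 * e ≤ (4 * 2 ^ n * T) * ((l : ℤ) ^ k) ^ m := by
        have e3 : ((l : ℤ) ^ k) ^ m = a ^ n * a ^ n := by rw [hmn, two_mul, pow_add]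
        rw [e3]
        have hT1 : 1 ≤ T := hTpos
        have : 0 < 2 ^ n * (a ^ n * a ^ n) := by positivity
        nlinarith
      rw [← hTn] at b2
      exact_mod_cast b2
    · have h4 : (q4 : ℤ) ∣ e := by
        apply exact_dvd p4 (N := W * R * S) ((hq4W.mul_right _).mul_right _) ?_ heN
        intro h
        have hWa : W ∣ a ^ n - 1 := (hWM.trans haM).trans (by simpa using sub_dvd_pow_sub_pow a 1 n)
        have hWb : W ∣ b j ^ n - 1 := (comb (hWM.trans hb1) hb0).trans (by simpa using sub_dvd_pow_sub_pow (b j) 1 n)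
        have h1u : ¬ (q4 : ℤ) ∣ 1 := fun h => p4.not_isUnit (isUnit_of_dvd_one h)
        have hSn : ¬ (q4 : ℤ) ∣ S := by
          intro h'
          apply h1u
          have e3 : (1 : ℤ) = W * R + S - (a ^ n - 1) := by rw [e1]; ring
          rw [e3]; exact dvd_sub (dvd_add (hq4W.mul_right _) h') (hq4W.trans hWa)
        have hRn : ¬ (q4 : ℤ) ∣ R := by
          intro h'
          apply h1u
          have e3 : (1 : ℤ) = R + W * S - (b j ^ n - 1) := by rw [e2]; ring
          rw [e3]; exact dvd_sub (dvd_add h' (hq4W.mul_right _)) (hq4W.trans hWb)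
        apply hq4W2
        exact p4.pow_dvd_of_dvd_mul_right _ hRn (p4.pow_dvd_of_dvd_mul_right _ hSn h)
      have := Int.le_of_dvd he h4
      have := hq4.two_le
      omega
    · intro h
      have h5 : (l : ℤ) ∣ 2 * W * b j ^ n := by
        have e3 : 2 * W * b j ^ n = (W ^ 2 + 1) * a ^ n - (W ^ 2 - 1) * (W * R - S) := by
          rw [← e1, ← e2]; ring
        rw [e3]
        refine dvd_sub (Dvd.dvd.mul_left ?_ _) (h.mul_left _)
        rw [ha, ← pow_mul]; exact dvd_pow_self _ (by positivity)
      rcases pl.dvd_or_dvd h5 with h | h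
      · rcases pl.dvd_or_dvd h with h | h
        · exact hl2 h
        · exact hWl h
      · exact hbl (pl.dvd_of_dvd_pow h)
    · rw [← e1]; linear_combination (-4) * heN
    · rw [← e1, ← e2]; ring
  choose e he using hex
  have hinj : Set.InjOn (fun j => -(e j)) (Finset.range J : Set ℕ) := by
    intro i hi j hj hij
    simp only [Finset.coe_range, Set.mem_Iio] at hi hj
    obtain ⟨-, hei, x, Y, hx, h1, h2⟩ := he i hi
    obtain ⟨-, hej, x', Y', hx', h1', h2'⟩ := he j hj
    have hee : e j = e i := by simpa using hij.symm
    rw [hee] at h1'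
    have hnk : 0 < k * n := by positivity
    have hWM' : W ∣ a ^ n - 1 := (hWM.trans haM).trans (by simpa using sub_dvd_pow_sub_pow a 1 n)
    have hbpos : ∀ j < J, 0 < b j := fun j hj => lt_of_lt_of_le hapos (hbprop j hj).2.2.1
    rcases even_key l x Y x' Y' (e i) (a ^ n) (k * n) pl hl2 hnk (by rw [ha, pow_mul]) hx hx' hei h1 h1' with h | h
    · subst h
      have h3 : 2 * W * b i ^ n = 2 * W * b j ^ n := by linarith
      have h4 : b i ^ n = b j ^ n := mul_left_cancel₀ (show (2 * W) ≠ 0 by omega) h3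
      have h5 : b i = b j := (pow_left_inj₀ (hbpos i hi).le (hbpos j hj).le hn.ne').1 h4
      have h6 : T * (i : ℤ) = T * j := by simp only [b] at h5; linarith
      exact_mod_cast mul_left_cancel₀ hTpos.ne' h6
    · exfalso
      subst h
      have h3 : (W ^ 2 + 1) * a ^ n = W * (b i ^ n + b j ^ n) := by linarith
      have h4 : W ∣ 1 := by
        have e3 : (1 : ℤ) = W * (b i ^ n + b j ^ n) - W * (W * a ^ n) - (a ^ n - 1) := by rw [← h3]; ring
        rw [e3]
        exact dvd_sub (dvd_sub (dvd_mul_right _ _) (dvd_mul_right _ _)) hWM'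
      have := Int.le_of_dvd one_pos h4
      omega
  have hsub : (fun j => -(e j)) '' (Finset.range J : Set ℕ) ⊆ {d : ℤ | GoodRankMsq m X d} := by
    rintro _ ⟨j, hj, rfl⟩
    simp only [Finset.coe_range, Set.mem_Iio] at hj
    exact (he j hj).1
  have hcard := Set.ncard_le_ncard hsub (good_finite m X)
  rw [Set.ncard_image_of_injOn hinj, Set.ncard_coe_finset, Finset.card_range] at hcard
  refine le_trans ?_ hcard
  rw [hJ]
  apply Nat.div_le_div_left _ (by omega)
  exact Nat.le_mul_of_pos_left _ (by positivity)

theorem exact_one (p c a b R S u : ℤ) (m : ℕ) (hp : Prime p) (hpc : ¬ p ∣ c) (hE : ¬ p ∣ (c ^ m) ^ 2 - 1)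
    (hm : ¬ p ∣ (m : ℤ)) (hu : ¬ p ∣ u) (hab : IsCoprime a b) (h : c * b - a = p * u)
    (e1 : c ^ m * R + S = a ^ m) (e2 : R + c ^ m * S = b ^ m) :
    p ∣ S ∧ ¬ p ^ 2 ∣ S ∧ ¬ p ∣ R := by
  have key : ((c ^ m) ^ 2 - 1) * S = (∑ i ∈ Finset.range m, (c * b) ^ i * a ^ (m - 1 - i)) * (p * u) := by
    rw [← h, geom_sum₂_mul, mul_pow, ← e1, ← e2]; ring
  have hnot : ¬ (p ∣ a ∧ p ∣ b) := by
    rintro ⟨h1, h2⟩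
    exact hp.not_isUnit (hab.isUnit_of_dvd' h1 h2)
  have hpS : p ∣ S := by
    have h1 : p ∣ ((c ^ m) ^ 2 - 1) * S := by rw [key]; exact (dvd_mul_right p u).mul_left _
    exact (hp.dvd_or_dvd h1).resolve_left hE
  refine ⟨hpS, ?_, ?_⟩
  · intro h2
    have h3 : p * p ∣ p * (u * ∑ i ∈ Finset.range m, (c * b) ^ i * a ^ (m - 1 - i)) := by
      have e3 : p * (u * ∑ i ∈ Finset.range m, (c * b) ^ i * a ^ (m - 1 - i)) = ((c ^ m) ^ 2 - 1) * S := by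
        rw [key]; ring
      rw [e3, ← pow_two]; exact h2.mul_left _
    have h4 := (mul_dvd_mul_iff_left hp.ne_zero).1 h3
    rcases hp.dvd_or_dvd h4 with h5 | h5
    · exact hu h5
    · rw [dvd_geom_sum₂_iff_of_dvd_sub (by rw [h]; exact dvd_mul_right _ _)] at h5
      rcases hp.dvd_or_dvd h5 with h6 | h6
      · exact hm h6
      · have ha : p ∣ a := hp.dvd_of_dvd_pow h6
        have hb : p ∣ c * b := by
          have e3 : c * b = p * u + a := by linarith
          rw [e3]; exact dvd_add (dvd_mul_right _ _) ha
        exact hnot ⟨ha, (hp.dvd_or_dvd hb).resolve_left hpc⟩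
  · intro h2
    apply hnot
    constructor
    · apply hp.dvd_of_dvd_pow (n := m)
      rw [← e1]; exact dvd_add (h2.mul_left _) hpS
    · apply hp.dvd_of_dvd_pow (n := m)
      rw [← e2]; exact dvd_add h2 (hpS.mul_left _)

theorem small_res (p M t : ℤ) (hM : 0 < M) (h : IsCoprime p M) : ∃ u : ℤ, 0 < u ∧ u ≤ M ∧ M ∣ p * u - t := by
  obtain ⟨r, s, hrs⟩ := h
  refine ⟨(r * t - 1) % M + 1, ?_, ?_, ?_⟩
  · have := Int.emod_nonneg (r * t - 1) hM.ne'; omega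
  · have := Int.emod_lt_of_pos (r * t - 1) hM; omega
  · have h1 : M ∣ (r * t - 1) % M - (r * t - 1) := (Int.mod_modEq (r * t - 1) M).symm.dvd
    have e : p * ((r * t - 1) % M + 1) - t = p * ((r * t - 1) % M - (r * t - 1)) + M * (-s * t) := by
      linear_combination t * hrs
    rw [e]; exact dvd_add (h1.mul_left _) (dvd_mul_right _ _)

theorem choose_v (M u v0 : ℕ) (hM : 0 < M) (hu : 0 < u) (hu2 : u ≤ M) (hv0 : 0 < v0) (hv2 : v0 ≤ M) :
    ∃ x : ℕ, v0 + M * x ≤ M + M * M ∧ ∀ l : ℕ, l.Prime → ¬ l ∣ M → l ∣ u → ¬ l ∣ v0 + M * x := by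
  refine ⟨∏ l ∈ u.primeFactors with ¬ l ∣ v0, l, ?_, ?_⟩
  · have h1 : ∏ l ∈ u.primeFactors with ¬ l ∣ v0, l ≤ u := by
      apply Nat.le_of_dvd hu
      exact (Finset.prod_dvd_prod_of_subset _ _ _ (Finset.filter_subset _ _)).trans (Nat.prod_primeFactors_dvd u)
    have := Nat.mul_le_mul_left M (h1.trans hu2)
    omega
  · intro l hl hlM hlu h
    by_cases hv : l ∣ v0
    · have h1 := (Nat.dvd_add_right hv).1 h
      have h2 := (hl.dvd_mul.1 h1).resolve_left hlM
      rw [hl.prime.dvd_finsetProd_iff] at h2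
      obtain ⟨q, hq, hlq⟩ := h2
      rw [Finset.mem_filter, Nat.mem_primeFactors] at hq
      have := (Nat.prime_dvd_prime_iff_eq hl hq.1.1).1 hlq
      subst this
      exact hq.2 hv
    · have h1 : l ∣ ∏ l ∈ u.primeFactors with ¬ l ∣ v0, l := by
        apply Finset.dvd_prod_of_mem (fun l => l)
        rw [Finset.mem_filter, Nat.mem_primeFactors]
        exact ⟨⟨hl, hlu, hu.ne'⟩, hv⟩
      exact hv ((Nat.dvd_add_left (h1.mul_left M)).1 h)

set_option maxHeartbeats 1000000 in
theorem odd_pair (m : ℕ) (hm : 1 < m) (hodd : Odd m) : ∃ C : ℕ, 0 < C ∧ ∀ N p1 p2 : ℕ, p1.Prime → p2.Prime →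
    p1 ≠ p2 → C < p1 → C < p2 → p1 ≤ N → p2 ≤ N →
    ∃ e : ℤ, 0 < e ∧ e ≤ ((C * N : ℕ) : ℤ) ^ (2 * m) ∧ (p1 : ℤ) ∣ e ∧ (p2 : ℤ) ∣ e ∧
      ∀ X : ℝ, (4 * e : ℝ) ≤ X → GoodRankMsq m X (-e) := by
  obtain ⟨c, M, b0, hc, hM, hcM, hEM, hcb, hG⟩ := setup_odd m hm hodd
  have hE : 0 < c ^ 2 - 1 := by nlinarith
  obtain ⟨Q, hQ⟩ : ∃ Q : ℕ, (Q : ℤ) = M * (c ^ 2 - 1) := ⟨(M * (c ^ 2 - 1)).toNat, Int.toNat_of_nonneg (by positivity)⟩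
  have hQpos : 0 < Q := by
    have : (0 : ℤ) < Q := by rw [hQ]; positivity
    exact_mod_cast this
  obtain ⟨cn, rfl⟩ : ∃ cn : ℕ, c = cn := ⟨c.toNat, (Int.toNat_of_nonneg (by linarith)).symm⟩
  have hcn : 2 ≤ cn := by exact_mod_cast hc
  set B : ℕ := Q + Q * Q with hB
  refine ⟨(cn + 1) * B + (cn ^ m) ^ 2 + cn + m, by omega, ?_⟩
  set C : ℕ := (cn + 1) * B + (cn ^ m) ^ 2 + cn + m with hC
  have hBC : (cn + 1) * B ≤ C := by omega
  have hBC' : B ≤ C := le_trans (Nat.le_mul_of_pos_left _ (by omega)) hBC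
  have hQB : Q ≤ B := by omega
  have big : ∀ p : ℕ, p.Prime → C < p → ∀ t : ℤ, 0 < t → t ≤ C → ¬ (p : ℤ) ∣ t := by
    intro p hp hCp t ht htC h
    have := Int.le_of_dvd ht h
    omega
  have fac : ∀ p : ℕ, p.Prime → C < p → ¬ (p : ℤ) ∣ (cn : ℤ) ∧ ¬ (p : ℤ) ∣ ((cn : ℤ) ^ m) ^ 2 - 1 ∧
      ¬ (p : ℤ) ∣ (m : ℤ) ∧ IsCoprime (p : ℤ) (Q : ℤ) := by
    intro p hp hCp
    have h1 : (1 : ℤ) < (cn : ℤ) ^ m := one_lt_pow₀ (by omega) (by omega)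
    have h2 : ((cn : ℤ) ^ m) ^ 2 ≤ C := by
      have : (cn ^ m) ^ 2 ≤ C := by omega
      exact_mod_cast this
    refine ⟨big p hp hCp _ (by omega) (by omega), big p hp hCp _ (by nlinarith) (by linarith),
      big p hp hCp _ (by omega) (by omega), ?_⟩
    rw [Prime.coprime_iff_not_dvd (Nat.prime_iff_prime_int.1 hp)]
    exact big p hp hCp _ (by omega) (by omega)
  intro N p1 p2 hp1 hp2 hne hC1 hC2 hN1 hN2
  have P1 := Nat.prime_iff_prime_int.1 hp1
  have P2 := Nat.prime_iff_prime_int.1 hp2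
  obtain ⟨f1, f2, f3, f4⟩ := fac p1 hp1 hC1
  obtain ⟨g1, g2, g3, g4⟩ := fac p2 hp2 hC2
  obtain ⟨u, hu, huQ, hu'⟩ := small_res p1 Q (cn * b0 - 1) (by omega) f4
  obtain ⟨v0, hv0, hv0Q, hv0'⟩ := small_res p2 Q (cn - b0) (by omega) g4
  obtain ⟨u, rfl⟩ : ∃ un : ℕ, u = un := ⟨u.toNat, (Int.toNat_of_nonneg hu.le).symm⟩
  obtain ⟨v0, rfl⟩ : ∃ un : ℕ, v0 = un := ⟨v0.toNat, (Int.toNat_of_nonneg hv0.le).symm⟩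
  obtain ⟨x, hx, hl⟩ := choose_v Q u v0 hQpos (by omega) (by omega) (by omega) (by omega)
  obtain ⟨v, hv⟩ : ∃ v : ℕ, v = v0 + Q * x := ⟨_, rfl⟩
  rw [← hv] at hx hl
  have hvpos : 0 < v := by omega
  have hv' : (Q : ℤ) ∣ p2 * v - (cn - b0) := by
    have e : (p2 : ℤ) * v - (cn - b0) = (p2 * v0 - (cn - b0)) + Q * (p2 * x) := by rw [hv]; push_cast; ring
    rw [e]; exact dvd_add hv0' (dvd_mul_right _ _)
  obtain ⟨s, hs⟩ := hu'
  obtain ⟨t, ht⟩ := hv'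
  rw [hQ] at hs ht
  -- a and b
  obtain ⟨a, ha⟩ : ∃ a : ℤ, a = 1 + M * (cn * t + s) := ⟨_, rfl⟩
  obtain ⟨b, hb⟩ : ∃ b : ℤ, b = b0 + M * (t + cn * s) := ⟨_, rfl⟩
  have Ea : ((cn : ℤ) ^ 2 - 1) * a = cn * (p2 * v) + p1 * u := by
    rw [ha]; linear_combination (-(cn : ℤ)) * ht - hs
  have Eb : ((cn : ℤ) ^ 2 - 1) * b = (p2 * v) + cn * (p1 * u) := by
    rw [hb]; linear_combination (-1) * ht - (cn : ℤ) * hs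
  have E1 : cn * b - a = p1 * u := by
    apply mul_left_cancel₀ hE.ne'; linear_combination (cn : ℤ) * Eb - Ea
  have E2 : cn * a - b = p2 * v := by
    apply mul_left_cancel₀ hE.ne'; linear_combination (cn : ℤ) * Ea - Eb
  have hp1pos : (0 : ℤ) < p1 := by have := hp1.pos; omega
  have hp2pos : (0 : ℤ) < p2 := by have := hp2.pos; omega
  have hvpos' : (0 : ℤ) < v := by omega
  have hcpos : (0 : ℤ) < cn := by omega
  have hpu : (0 : ℤ) < p1 * u := by positivity
  have hpv : (0 : ℤ) < p2 * v := by positivity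
  have hapos : 0 < a := by
    apply pos_of_mul_pos_right (a := ((cn : ℤ) ^ 2 - 1)) _ hE.le
    rw [Ea]; positivity
  have hbpos : 0 < b := by
    apply pos_of_mul_pos_right (a := ((cn : ℤ) ^ 2 - 1)) _ hE.le
    rw [Eb]; positivity
  have haM : M ∣ a - 1 := ⟨cn * t + s, by rw [ha]; ring⟩
  have hbM : M ∣ b - b0 := ⟨t + cn * s, by rw [hb]; ring⟩
  have hun : ¬ (p1 : ℤ) ∣ u := big p1 hp1 hC1 _ hu (by omega)
  have hvn : ¬ (p2 : ℤ) ∣ v := big p2 hp2 hC2 _ hvpos' (by omega)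
  have hun2 : ¬ (p2 : ℤ) ∣ u := big p2 hp2 hC2 _ hu (by omega)
  have hvn2 : ¬ (p1 : ℤ) ∣ v := big p1 hp1 hC1 _ hvpos' (by omega)
  have hab : IsCoprime a b := by
    apply isCoprime_of_prime_dvd (by rintro ⟨h, -⟩; omega)
    intro z hz hza hzb
    have hzM : ¬ z ∣ M := by
      intro h
      have := dvd_sub hza (h.trans haM)
      have e : a - (a - 1) = 1 := by ring
      rw [e] at this
      exact hz.not_isUnit (isUnit_of_dvd_one this)
    have hzQ : ¬ z ∣ (Q : ℤ) := by
      rw [hQ]; intro h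
      rcases hz.dvd_or_dvd h with h | h
      · exact hzM h
      · exact hzM (h.trans hEM)
    have z1 : z ∣ p1 * u := by rw [← E1]; exact dvd_sub (hzb.mul_left _) hza
    have z2 : z ∣ p2 * v := by rw [← E2]; exact dvd_sub (hza.mul_left _) hzb
    rcases hz.dvd_or_dvd z1 with h1 | h1 <;> rcases hz.dvd_or_dvd z2 with h2 | h2
    · have := Nat.isCoprime_iff_coprime.2 ((Nat.coprime_primes hp1 hp2).2 hne)
      exact hz.not_isUnit (this.isUnit_of_dvd' h1 h2)
    · exact hvn2 (((hz.associated_of_dvd P1 h1).symm.dvd).trans h2)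
    · exact hun2 (((hz.associated_of_dvd P2 h2).symm.dvd).trans h1)
    · exact hl z.natAbs (Int.prime_iff_natAbs_prime.1 hz) (fun h => hzQ (Int.natCast_dvd_natCast.2 h |> fun h => by simpa using h))
        (Int.natAbs_dvd_natAbs.2 h1) (Int.natAbs_dvd_natAbs.2 h2)
  have i1 : b ^ m < (cn : ℤ) ^ m * a ^ m := by
    rw [← mul_pow]; exact pow_lt_pow_left₀ (by linarith) hbpos.le (by omega)
  have i2 : a ^ m < (cn : ℤ) ^ m * b ^ m := by
    rw [← mul_pow]; exact pow_lt_pow_left₀ (by linarith) hapos.le (by omega)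
  obtain ⟨R, S, hR, hS, e1, e2, hmain⟩ := hG a b haM hbM hab i1 i2
  obtain ⟨x1, x2, x3⟩ := exact_one p1 cn a b R S u m P1 f1 f2 f3 hun hab E1 e1 e2
  obtain ⟨y1, y2, y3⟩ := exact_one p2 cn b a S R v m P2 g1 g2 g3 hvn hab.symm E2 (by linarith) (by linarith)
  have hWpos : (0 : ℤ) < (cn : ℤ) ^ m := by positivity
  have hNpos : 0 < (cn : ℤ) ^ m * R * S := by positivity
  obtain ⟨e, y, he, hes, heN, hele⟩ := sqfree_part _ hNpos
  refine ⟨e, he, ?_, ?_, ?_, fun X hX => good_of m X _ e y he hes heN hX hmain⟩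
  · refine hele.trans ?_
    have q1 : (p1 : ℤ) * u ≤ N * B := mul_le_mul (by omega) (by omega) hu.le (by omega)
    have q2 : (p2 : ℤ) * v ≤ N * B := mul_le_mul (by omega) (by omega) hvpos'.le (by omega)
    have q3 : ((cn : ℤ) + 1) * B ≤ C := by exact_mod_cast hBC
    have q4 : ((cn : ℤ) + 1) * B * N ≤ C * N := mul_le_mul_of_nonneg_right q3 (by omega)
    have a1 : a ≤ C * N := by
      have h1 : a ≤ ((cn : ℤ) ^ 2 - 1) * a := le_mul_of_one_le_left hapos.le (by omega)
      have h2 := mul_le_mul_of_nonneg_left q2 hcpos.le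
      rw [Ea] at h1
      linarith
    have b1 : b ≤ C * N := by
      have h1 : b ≤ ((cn : ℤ) ^ 2 - 1) * b := le_mul_of_one_le_left hbpos.le (by omega)
      have h2 := mul_le_mul_of_nonneg_left q1 hcpos.le
      rw [Eb] at h1
      linarith
    have t1 : (cn : ℤ) ^ m * R ≤ a ^ m := by linarith
    have t2 : S ≤ b ^ m := by
      have h1 : S ≤ (cn : ℤ) ^ m * S := le_mul_of_one_le_left hS.le (by omega)
      linarith
    calc (cn : ℤ) ^ m * R * S ≤ a ^ m * b ^ m := mul_le_mul t1 t2 hS.le (by positivity)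
      _ ≤ ((C : ℤ) * N) ^ m * ((C : ℤ) * N) ^ m := mul_le_mul (pow_le_pow_left₀ hapos.le a1 m)
          (pow_le_pow_left₀ hbpos.le b1 m) (by positivity) (by positivity)
      _ = _ := by rw [two_mul, pow_add]; push_cast; rfl
  · refine exact_dvd P1 (x1.mul_left _) ?_ heN
    intro h
    exact x2 (P1.pow_dvd_of_dvd_mul_left _ (fun h => (P1.dvd_or_dvd h).elim (fun h => f1 (P1.dvd_of_dvd_pow h)) x3) h)
  · refine exact_dvd P2 ((y1.mul_left _).mul_right _) ?_ heN
    intro h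
    have h' : (p2 : ℤ) ^ 2 ∣ ((cn : ℤ) ^ m * S) * R := by
      have e3 : (cn : ℤ) ^ m * S * R = (cn : ℤ) ^ m * R * S := by ring
      rw [e3]; exact h
    exact y2 (P2.pow_dvd_of_dvd_mul_left _ (fun h => (P2.dvd_or_dvd h).elim (fun h => g1 (P2.dvd_of_dvd_pow h)) y3) h')

/-- primes `p ≤ N` with `p ^ 2 > N` -/
def bigPrimes (N : ℕ) : Finset ℕ := (Finset.range (N + 1)).filter (fun p => p.Prime ∧ N < p ^ 2)

theorem big_primes_dvd_card (N k : ℕ) (hN : 2 ≤ N) (e : ℕ) (he : 0 < e) (hle : e ≤ N ^ k) :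
    ((bigPrimes N).filter (fun p => p ∣ e)).card ≤ 2 * k := by
  set S := (bigPrimes N).filter (fun p => p ∣ e) with hS
  have hmem : ∀ p ∈ S, p.Prime ∧ N < p ^ 2 ∧ p ∣ e := by
    intro p hp
    rw [hS, Finset.mem_filter, bigPrimes, Finset.mem_filter] at hp
    exact ⟨hp.1.2.1, hp.1.2.2, hp.2⟩
  have h1 : ∏ p ∈ S, p ∣ e :=
    Finset.prod_primes_dvd e (fun p hp => (hmem p hp).1.prime) (fun p hp => (hmem p hp).2.2)
  have h2 : ∏ p ∈ S, p ≤ N ^ k := (Nat.le_of_dvd he h1).trans hle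
  have h3 : N ^ S.card ≤ N ^ (2 * k) := by
    calc N ^ S.card ≤ ∏ p ∈ S, p ^ 2 := by
          rw [← Finset.prod_const]
          exact Finset.prod_le_prod' (fun p hp => (hmem p hp).2.1.le)
      _ = (∏ p ∈ S, p) ^ 2 := Finset.prod_pow _ _ _
      _ ≤ (N ^ k) ^ 2 := Nat.pow_le_pow_left h2 2
      _ = N ^ (2 * k) := by rw [← pow_mul, mul_comm]
  exact (Nat.pow_le_pow_iff_right (by omega)).1 h3

theorem odd_count (m : ℕ) (hm : 1 < m) (hodd : Odd m) : ∃ C : ℕ, 0 < C ∧ ∀ N : ℕ, C ≤ N → ∀ X : ℝ,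
    ((C : ℝ) * N) ^ (2 * m) ≤ X →
    (bigPrimes N).card * (bigPrimes N).card - (bigPrimes N).card ≤
      (2 * (2 * m + 1)) ^ 2 * {d : ℤ | GoodRankMsq m X d}.ncard := by
  obtain ⟨C, hC, hpair⟩ := odd_pair m hm hodd
  refine ⟨C ^ (2 * m) + C ^ 2 + 4 * C + 2, by omega, ?_⟩
  intro N hN X hX
  have hN2 : 2 ≤ N := by omega
  have hbig : ∀ p ∈ bigPrimes N, p.Prime ∧ C < p ∧ p ≤ N := by
    intro p hp
    rw [bigPrimes, Finset.mem_filter, Finset.mem_range] at hp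
    refine ⟨hp.2.1, ?_, by omega⟩
    have : C ^ 2 < p ^ 2 := by omega
    exact lt_of_pow_lt_pow_left₀ 2 (by omega) this
  have hex : ∀ q : ℕ × ℕ, ∃ e : ℤ, q ∈ (bigPrimes N).offDiag → (0 < e ∧ e ≤ ((C * N : ℕ) : ℤ) ^ (2 * m) ∧
      (q.1 : ℤ) ∣ e ∧ (q.2 : ℤ) ∣ e ∧ GoodRankMsq m X (-e)) := by
    intro q
    by_cases hq : q ∈ (bigPrimes N).offDiag
    swap
    · exact ⟨0, fun h => absurd h hq⟩
    have hq' := Finset.mem_offDiag.1 hq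
    obtain ⟨a1, a2, a3⟩ := hbig _ hq'.1
    obtain ⟨b1, b2, b3⟩ := hbig _ hq'.2.1
    obtain ⟨e, h1, h2, h3, h4, h5⟩ := hpair N q.1 q.2 a1 b1 hq'.2.2 a2 b2 a3 b3
    refine ⟨e, fun _ => ⟨h1, h2, h3, h4, h5 X (le_trans ?_ hX)⟩⟩
    have h6 : (e : ℝ) ≤ ((C : ℝ) * N) ^ (2 * m) := by exact_mod_cast h2
    have h7 : (4 : ℝ) ≤ 4 ^ (2 * m) := le_self_pow₀ (by norm_num) (by omega)
    calc (4 * e : ℝ) ≤ 4 ^ (2 * m) * ((C : ℝ) * N) ^ (2 * m) := by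
          apply mul_le_mul h7 h6 _ (by positivity)
          exact_mod_cast h1.le
      _ = (((4 * C : ℕ) : ℝ) * N) ^ (2 * m) := by rw [← mul_pow]; push_cast; ring
      _ ≤ _ := by
          apply pow_le_pow_left₀ (by positivity)
          apply mul_le_mul_of_nonneg_right _ (by positivity)
          exact_mod_cast (by omega)
  choose e he using hex
  have h1 : (bigPrimes N).offDiag.card ≤ (2 * (2 * m + 1)) ^ 2 * ((bigPrimes N).offDiag.image (fun q => -(e q))).card := by
    apply Finset.card_le_mul_card_image
    intro d hd
    obtain ⟨q0, hq0, rfl⟩ := Finset.mem_image.1 hd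
    obtain ⟨c1, c2, -⟩ := he q0 hq0
    obtain ⟨en, hen⟩ : ∃ en : ℕ, e q0 = en := ⟨(e q0).toNat, (Int.toNat_of_nonneg c1.le).symm⟩
    rw [hen] at c1 c2
    have c3 : en ≤ N ^ (2 * m + 1) := by
      have c4 : en ≤ (C * N) ^ (2 * m) := by exact_mod_cast c2
      refine c4.trans ?_
      rw [mul_pow, pow_succ, mul_comm]
      exact Nat.mul_le_mul_left _ (by omega)
    have hcard := big_primes_dvd_card N (2 * m + 1) hN2 en (by exact_mod_cast c1) c3
    have hsub : ((bigPrimes N).offDiag.filter (fun q => -(e q) = -(e q0))) ⊆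
        ((bigPrimes N).filter (fun p => p ∣ en)) ×ˢ ((bigPrimes N).filter (fun p => p ∣ en)) := by
      intro q hq
      rw [Finset.mem_filter] at hq
      obtain ⟨hq, hqe⟩ := hq
      have hqe' : e q = en := by rw [← hen]; linarith
      obtain ⟨-, -, d1, d2, -⟩ := he q hq
      rw [hqe'] at d1 d2
      have hq' := Finset.mem_offDiag.1 hq
      rw [Finset.mem_product, Finset.mem_filter, Finset.mem_filter]
      exact ⟨⟨hq'.1, by exact_mod_cast d1⟩, ⟨hq'.2.1, by exact_mod_cast d2⟩⟩
    refine (Finset.card_le_card hsub).trans ?_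
    rw [Finset.card_product, pow_two]
    exact Nat.mul_le_mul hcard hcard
  rw [Finset.offDiag_card] at h1
  refine h1.trans (Nat.mul_le_mul_left _ ?_)
  rw [← Set.ncard_coe_finset]
  apply Set.ncard_le_ncard _ (good_finite m X)
  intro d hd
  rw [Finset.mem_coe, Finset.mem_image] at hd
  obtain ⟨q, hq, rfl⟩ := hd
  exact (he q hq).2.2.2.2

theorem bigPrimes_card (N : ℕ) : (Nat.primeCounting N : ℝ) - Real.sqrt N ≤ (bigPrimes N).card := by
  have h : Nat.primeCounting N ≤ (bigPrimes N).card + Nat.sqrt N := by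
    rw [Nat.primeCounting, Nat.primeCounting', Nat.count_eq_card_filter_range]
    have hsub : (Finset.range (N + 1)).filter Nat.Prime ⊆ bigPrimes N ∪ Finset.Icc 1 (Nat.sqrt N) := by
      intro p hp
      rw [Finset.mem_filter] at hp
      rw [Finset.mem_union, bigPrimes, Finset.mem_filter, Finset.mem_Icc]
      by_cases h : N < p ^ 2
      · exact Or.inl ⟨hp.1, hp.2, h⟩
      · right
        exact ⟨hp.2.one_lt.le, Nat.le_sqrt'.2 (by omega)⟩
    refine (Finset.card_le_card hsub).trans ((Finset.card_union_le _ _).trans ?_)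
    simp
  have h2 : (Nat.primeCounting N : ℝ) ≤ (bigPrimes N).card + Nat.sqrt N := by exact_mod_cast h
  have h3 : ((Nat.sqrt N : ℕ) : ℝ) ≤ Real.sqrt N := Real.nat_sqrt_le_real_sqrt
  linarith

theorem bigPrimes_asymp : ∃ N0 : ℕ, ∀ N : ℕ, N0 ≤ N →
    2 ≤ (N : ℝ) / (4 * Real.log N) ∧ (N : ℝ) / (4 * Real.log N) ≤ (bigPrimes N).card ∧ 0 < Real.log N := by
  have h1 : ∀ᶠ x : ℝ in Filter.atTop, Real.log x ≤ 0.1 * Real.sqrt x := by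
    have := (isLittleO_log_rpow_atTop (r := 1 / 2) (by norm_num)).bound (c := 0.1) (by norm_num)
    filter_upwards [this, Filter.eventually_ge_atTop 1] with x hx hx1
    rw [Real.sqrt_eq_rpow]
    rw [Real.norm_of_nonneg (Real.log_nonneg hx1), Real.norm_of_nonneg (by positivity)] at hx
    exact hx
  have h2 := tendsto_natCast_atTop_atTop (R := ℝ) |>.eventually h1
  obtain ⟨N0, hN0⟩ := Filter.eventually_atTop.1 h2
  refine ⟨max N0 100, fun N hN => ?_⟩
  have hN1 : N0 ≤ N := le_trans (le_max_left _ _) hN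
  have hN2 : 100 ≤ N := le_trans (le_max_right _ _) hN
  have hN2' : (100 : ℝ) ≤ N := by exact_mod_cast hN2
  have hl := hN0 N hN1
  have hlog : 0 < Real.log N := Real.log_pos (by linarith)
  have hs : Real.sqrt N * Real.sqrt N = N := Real.mul_self_sqrt (by linarith)
  have hs1 : 10 ≤ Real.sqrt N := Real.le_sqrt_of_sq_le (by linarith)
  have hl2 : Real.log ((N : ℝ) + 1) ≤ Real.log N + 1 := by
    have h : Real.log ((N : ℝ) + 1) ≤ Real.log (N * Real.exp 1) := by
      apply Real.log_le_log (by linarith)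
      have := Real.add_one_le_exp 1
      nlinarith
    rw [Real.log_mul (by linarith) (Real.exp_pos 1).ne', Real.log_exp] at h
    exact h
  refine ⟨?_, ?_, hlog⟩
  · rw [le_div_iff₀ (by positivity)]
    nlinarith
  · refine le_trans ?_ (bigPrimes_card N)
    have hpi := Chebyshev.pi_ge N
    have : (N : ℝ) / (4 * Real.log N) ≤ ((N : ℝ) * Real.log 2 - Real.log (N + 1)) / Real.log N - Real.sqrt N := by
      rw [le_sub_iff_add_le, div_add' _ _ _ (by positivity), div_le_div_iff₀ (by positivity) hlog]
      have h2 := Real.log_two_gt_d9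
      have k1 : Real.sqrt N * Real.log N ≤ 0.1 * N := by nlinarith
      have k3 : (N : ℝ) * 0.69 ≤ N * Real.log 2 := by nlinarith
      have k2 : (N : ℝ) / 4 + Real.sqrt N * Real.log N ≤ N * Real.log 2 - Real.log (N + 1) := by nlinarith
      have := mul_le_mul_of_nonneg_left k2 (show (0 : ℝ) ≤ 4 * Real.log N by positivity)
      nlinarith
    linarith

theorem even_final (m : ℕ) (hm : 1 < m) (n : ℕ) (hn : 0 < n) (hmn : m = 2 * n) :
    ∃ c : ℝ, 0 < c ∧ ∃ X₀ : ℝ, ∀ X : ℝ, X₀ ≤ X →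
      c * X ^ ((1 : ℝ) / (m : ℝ)) / (Real.log X) ^ 2 ≤
        ({d : ℤ | GoodRankMsq m X d}.ncard : ℝ) := by
  obtain ⟨C, L, hC, hL, hcount⟩ := even_count m n hn hmn
  have hC' : (0 : ℝ) < C := by exact_mod_cast hC
  have hC1 : (1 : ℝ) ≤ C := by exact_mod_cast hC
  have hL' : (1 : ℝ) < L := by exact_mod_cast hL
  have hm0 : (m : ℝ) ≠ 0 := by positivity
  refine ⟨1 / (2 * L * C * (C : ℝ) ^ ((1 : ℝ) / m)), by positivity, max 3 (C * (2 * L * C) ^ m), ?_⟩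
  intro X hX
  have hX3 : 3 ≤ X := (le_max_left _ _).trans hX
  have hX4 : (C : ℝ) * (2 * L * C) ^ m ≤ X := (le_max_right _ _).trans hX
  have hXpos : 0 < X := by linarith
  set Y : ℝ := (X / C) ^ ((1 : ℝ) / m) with hY
  have hYpos : 0 < Y := by positivity
  have hYm : Y ^ m = X / C := by
    rw [hY, ← Real.rpow_natCast, ← Real.rpow_mul (by positivity), one_div_mul_cancel hm0, Real.rpow_one]
  have hYbig : 2 * L * C ≤ Y := by
    apply le_of_pow_le_pow_left₀ (n := m) (by omega) hYpos.le
    rw [hYm, le_div_iff₀ hC']; linarith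
  have hYX : X ^ ((1 : ℝ) / m) = Y * (C : ℝ) ^ ((1 : ℝ) / m) := by
    rw [hY, ← Real.mul_rpow (by positivity) hC'.le, div_mul_cancel₀ _ hC'.ne']
  have hLY : (L : ℝ) ≤ Y := by nlinarith
  obtain ⟨k, hk1, hk2⟩ := exists_nat_pow_near (by linarith : (1 : ℝ) ≤ Y) hL'
  have hk : 0 < k := by
    rcases Nat.eq_zero_or_pos k with h | h
    · subst h; simp at hk2; linarith
    · exact h
  have hc := hcount k hk X (by
    have := pow_le_pow_left₀ (by positivity) hk1 m
    rw [hYm, le_div_iff₀ hC'] at this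
    linarith)
  have hc' : ((L ^ k / C : ℕ) : ℝ) ≤ ({d : ℤ | GoodRankMsq m X d}.ncard : ℝ) := by exact_mod_cast hc
  refine le_trans ?_ hc'
  have hdiv : (L : ℝ) ^ k < C * (((L ^ k / C : ℕ) : ℝ) + 1) := by
    exact_mod_cast Nat.lt_mul_div_succ (L ^ k) hC
  have hlog : 1 ≤ Real.log X := by
    rw [Real.le_log_iff_exp_le hXpos]
    have := Real.exp_one_lt_d9
    linarith
  have hlog2 : 1 ≤ (Real.log X) ^ 2 := one_le_pow₀ hlog
  have e1 : 1 / (2 * L * C * (C : ℝ) ^ ((1 : ℝ) / m)) * X ^ ((1 : ℝ) / (m : ℝ)) = Y / (2 * L * C) := by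
    rw [hYX]; field_simp
  rw [e1]
  refine (div_le_self (by positivity) hlog2).trans ?_
  have h1 : 1 ≤ Y / (2 * L * C) := by rw [le_div_iff₀ (by positivity)]; linarith
  have h2 : Y / (2 * L * C) * 2 ≤ ((L ^ k / C : ℕ) : ℝ) + 1 := by
    rw [pow_succ] at hk2
    have e2 : Y / (2 * L * C) * 2 = Y / (L * C) := by field_simp
    rw [e2, div_le_iff₀ (by positivity)]
    nlinarith
  linarith

theorem odd_final (m : ℕ) (hm : 1 < m) (hodd : Odd m) :
    ∃ c : ℝ, 0 < c ∧ ∃ X₀ : ℝ, ∀ X : ℝ, X₀ ≤ X →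
      c * X ^ ((1 : ℝ) / (m : ℝ)) / (Real.log X) ^ 2 ≤
        ({d : ℤ | GoodRankMsq m X d}.ncard : ℝ) := by
  obtain ⟨C, hC, hcount⟩ := odd_count m hm hodd
  obtain ⟨N0, hN0⟩ := bigPrimes_asymp
  have hC' : (0 : ℝ) < C := by exact_mod_cast hC
  have hC1 : (1 : ℝ) ≤ C := by exact_mod_cast hC
  have hm0 : (m : ℝ) ≠ 0 := by positivity
  set D : ℝ := (((2 * (2 * m + 1)) ^ 2 : ℕ) : ℝ) with hD
  have hDpos : 0 < D := by rw [hD]; exact_mod_cast (by positivity)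
  set Y0 : ℝ := C * (N0 + C + 2) with hY0
  have hY0pos : 0 < Y0 := by positivity
  refine ⟨1 / (128 * C ^ 2 * D), by positivity, max 3 (Y0 ^ (2 * m)), ?_⟩
  intro X hX
  have hX3 : 3 ≤ X := (le_max_left _ _).trans hX
  have hX4 : Y0 ^ (2 * m) ≤ X := (le_max_right _ _).trans hX
  have hXpos : 0 < X := by linarith
  set Y : ℝ := X ^ ((1 : ℝ) / ((2 * m : ℕ) : ℝ)) with hY
  have hYpos : 0 < Y := by positivity
  have h2m : ((2 * m : ℕ) : ℝ) ≠ 0 := by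
    have : 2 * m ≠ 0 := by omega
    exact_mod_cast this
  have hYm : Y ^ (2 * m) = X := by
    rw [hY, ← Real.rpow_natCast, ← Real.rpow_mul (by positivity), one_div_mul_cancel h2m, Real.rpow_one]
  have hY2 : X ^ ((1 : ℝ) / m) = Y ^ 2 := by
    rw [hY, ← Real.rpow_natCast, ← Real.rpow_mul (by positivity)]
    congr 1
    push_cast
    field_simp
  have hYbig : Y0 ≤ Y := by
    apply le_of_pow_le_pow_left₀ (n := 2 * m) (by omega) hYpos.le
    rw [hYm]; exact hX4
  have hYC : (N0 : ℝ) + C + 2 ≤ Y / C := by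
    rw [le_div_iff₀ hC']; linarith
  set N : ℕ := ⌊Y / C⌋₊ with hN
  have hNle : (N : ℝ) ≤ Y / C := Nat.floor_le (by positivity)
  have hNlt : Y / C < N + 1 := Nat.lt_floor_add_one _
  have hNbig : N0 + C + 2 ≤ N := by
    apply Nat.le_floor; push_cast; exact hYC
  have hNbig' : (2 : ℝ) ≤ N := by
    have : 2 ≤ N := by omega
    exact_mod_cast this
  have hc := hcount N (by omega) X (by
    rw [← hYm]
    apply pow_le_pow_left₀ (by positivity)
    rw [le_div_iff₀ hC'] at hNle
    linarith)
  obtain ⟨k1, k2, k3⟩ := hN0 N (by omega)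
  set t : ℕ := (bigPrimes N).card with ht
  set Z : ℕ := {d : ℤ | GoodRankMsq m X d}.ncard with hZ
  have hc' : (t : ℝ) * t ≤ D * Z + t := by
    rw [Nat.sub_le_iff_le_add] at hc
    rw [hD]; exact_mod_cast hc
  have ht2 : (2 : ℝ) ≤ t := k1.trans k2
  have hc2 : (t : ℝ) ^ 2 ≤ 2 * (D * Z) := by nlinarith
  have hNX : (N : ℝ) ≤ X := by
    have h1 : Y / C ≤ Y := div_le_self hYpos.le hC1
    have h2 : Y ≤ Y ^ (2 * m) := le_self_pow₀ (by linarith) (by omega)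
    linarith
  have hlog : Real.log N ≤ Real.log X := Real.log_le_log (by linarith) hNX
  have hlX : 0 < Real.log X := by linarith
  have h3 : (N : ℝ) / (4 * Real.log X) ≤ t :=
    (div_le_div_of_nonneg_left (by positivity) (by positivity) (by linarith)).trans k2
  have h4 : Y / (2 * C) ≤ N := by
    have : Y / (2 * C) = (Y / C) / 2 := by field_simp
    rw [this]; linarith
  have h5 : Y / (2 * C) / (4 * Real.log X) ≤ t :=
    (div_le_div_of_nonneg_right h4 (by positivity)).trans h3
  have h6 : (Y / (2 * C) / (4 * Real.log X)) ^ 2 ≤ 2 * (D * Z) :=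
    (pow_le_pow_left₀ (by positivity) h5 2).trans hc2
  have e1 : 1 / (128 * C ^ 2 * D) * X ^ ((1 : ℝ) / (m : ℝ)) / (Real.log X) ^ 2 =
      (Y / (2 * C) / (4 * Real.log X)) ^ 2 / (2 * D) := by
    rw [hY2]; field_simp; norm_num
  rw [e1, div_le_iff₀ (by positivity)]
  linarith

/-- Kulkarni–Levin: for any integer `m > 1`, there are `≫ X^(1/m)/(log X)²` imaginary
quadratic fields with `|d_k| ≤ X` whose ideal class group has `m`-rank at least 2. -/
theorem count_imag_quad_mrank_two (m : ℕ) (hm : 1 < m) :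
    ∃ c : ℝ, 0 < c ∧ ∃ X₀ : ℝ, ∀ X : ℝ, X₀ ≤ X →
      c * X ^ ((1 : ℝ) / (m : ℝ)) / (Real.log X) ^ 2 ≤
        ({d : ℤ | GoodRankMsq m X d}.ncard : ℝ) := by
  rcases Nat.even_or_odd' m with ⟨n, h | h⟩
  · exact even_final m hm n (by omega) h
  · exact odd_final m hm ⟨n, h⟩
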